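/- arXiv:1811.07865 — 2 statements merged into one kernel-verified Lean document; each statement's English description precedes it below -/
import Mathlib

section
/- Let V ⊆ ℂ^n be an irreducible variety of dimension d. Then there exist polynomials P_1,…,P_{n−d} ∈ ℂ[x_1,…,x_n] such that for every 1 ≤ i ≤ n−d: (i) the maximal dimension of an irreducible component of Z(P_1,…,P_i) containing V is n−i; (ii) Z(P_1,…,P_i) contains an (n−i)-minimal variety of V; and (iii) deg(P_i) = δ_i(V). Moreover, (deg(P_1),…,deg(P_{n−d})) = (δ_1(V),…,δ_{n−d}(V)) is lexicographically least among all tuples (deg(P_1^*),…,deg(P_{n−d}^*)) of polynomials P_1^*,…,P_{n−d}^* satisfying conclusions (i) and (ii). -/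
open MvPolynomial Set

noncomputable section

namespace Paper

variable (n : ℕ)

/-- The zero locus in `ℂⁿ` of a set of polynomials. -/
def zeroLocus (I : Set (MvPolynomial (Fin n) ℂ)) : Set (Fin n → ℂ) :=
  {x | ∀ f ∈ I, eval x f = 0}

/-- A subset of `ℂⁿ` is algebraic if it is the zero locus of a set of polynomials. -/
def IsAlgebraicSet (V : Set (Fin n → ℂ)) : Prop :=
  ∃ I : Set (MvPolynomial (Fin n) ℂ), V = zeroLocus n I

/-- An irreducible (affine) variety in `ℂⁿ`: a nonempty algebraic set that is not covered
by two algebraic sets unless it is contained in one of them. -/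
def IsIrredVariety (V : Set (Fin n → ℂ)) : Prop :=
  IsAlgebraicSet n V ∧ V.Nonempty ∧
    ∀ V₁ V₂ : Set (Fin n → ℂ), IsAlgebraicSet n V₁ → IsAlgebraicSet n V₂ →
      V ⊆ V₁ ∪ V₂ → V ⊆ V₁ ∨ V ⊆ V₂

/-- There is a strictly increasing chain of `d + 1` irreducible varieties inside `V`. -/
def HasChain (V : Set (Fin n → ℂ)) (d : ℕ) : Prop :=
  ∃ W : Fin (d + 1) → Set (Fin n → ℂ),
    (∀ i, IsIrredVariety n (W i)) ∧ (∀ i j : Fin (d + 1), i < j → W i ⊂ W j) ∧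
      W (Fin.last d) ⊆ V

/-- The (Krull) dimension of a subset of `ℂⁿ`, as the length of the longest chain of
irreducible subvarieties. -/
def dim (V : Set (Fin n → ℂ)) : ℕ := sSup {d | HasChain n V d}

/-- `W` is an irreducible component of `X`: an irreducible subvariety that is maximal among
irreducible subvarieties of `X`. -/
def IsIrredComponent (W X : Set (Fin n → ℂ)) : Prop :=
  IsIrredVariety n W ∧ W ⊆ X ∧
    ∀ W', IsIrredVariety n W' → W ⊆ W' → W' ⊆ X → W' = W

/-- The degree of an irreducible variety `V ⊆ ℂⁿ` of dimension `d` (i.e. the degree of its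
projective closure): the largest finite number of points in which an affine-linear subspace of
dimension `n - d` meets `V`. -/
def degree (V : Set (Fin n → ℂ)) : ℕ :=
  sSup { m | ∃ L : AffineSubspace ℂ (Fin n → ℂ),
    Module.finrank ℂ L.direction = n - dim n V ∧ (V ∩ ↑L).Finite ∧ (V ∩ ↑L).ncard = m }

/-- The degree of an algebraic set: the sum of the degrees of its irreducible components. -/
def degreeSum (X : Set (Fin n → ℂ)) : ℕ :=
  ∑ᶠ W ∈ {W | IsIrredComponent n W X}, degree n W

/-- The maximal dimension of an irreducible component of `X` containing `V` equals `e`. -/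
def MaxCompDimEq (X V : Set (Fin n → ℂ)) (e : ℕ) : Prop :=
  (∃ W, IsIrredComponent n W X ∧ V ⊆ W ∧ dim n W = e) ∧
    ∀ W, IsIrredComponent n W X → V ⊆ W → dim n W ≤ e

/-- The partial degrees `δ_i(V)` of an irreducible variety `V`:  the minimal `δ` such that there
are polynomials of degree at most `δ` cutting out an algebraic set containing `V` whose
irreducible components containing `V` have maximal dimension `n - i`.  By convention
`δ_0(V) = 0`. -/
def partialDeg (V : Set (Fin n → ℂ)) (i : ℕ) : ℕ :=
  if i = 0 then 0
  else sInf { δ | ∃ I : Finset (MvPolynomial (Fin n) ℂ),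
    (∀ f ∈ I, f.totalDegree ≤ δ) ∧ V ⊆ zeroLocus n ↑I ∧
      MaxCompDimEq n (zeroLocus n ↑I) V (n - i) }

/-- The partial degrees as extended naturals, with the convention `δ_i(V) = ∞` for
`i > n - dim V`. -/
def partialDegE (V : Set (Fin n → ℂ)) (i : ℕ) : ℕ∞ :=
  if i ≤ n - dim n V then (partialDeg n V i : ℕ∞) else ⊤

/-- `δ(V)` for an irreducible variety `V`: the minimal `δ` such that `V` is an irreducible
component of the zero set of a finite family of polynomials of degree at most `δ`. -/
def deltaIrr (V : Set (Fin n → ℂ)) : ℕ :=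
  sInf { δ | ∃ I : Finset (MvPolynomial (Fin n) ℂ),
    (∀ f ∈ I, f.totalDegree ≤ δ) ∧ IsIrredComponent n V (zeroLocus n ↑I) }

/-- `δ(V)` for a general algebraic set `V`: the minimal `δ` such that every irreducible
component of `V` is an irreducible component of the zero set of a finite family of polynomials
of degree at most `δ`. -/
def deltaSet (V : Set (Fin n → ℂ)) : ℕ :=
  sInf { δ | ∃ I : Finset (MvPolynomial (Fin n) ℂ),
    (∀ f ∈ I, f.totalDegree ≤ δ) ∧
      ∀ W, IsIrredComponent n W V → IsIrredComponent n W (zeroLocus n ↑I) }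

/-- An algebraic set all of whose irreducible components have dimension `d`. -/
def IsAlgSetOfDim (V : Set (Fin n → ℂ)) (d : ℕ) : Prop :=
  IsAlgebraicSet n V ∧ V.Nonempty ∧ ∀ W, IsIrredComponent n W V → dim n W = d

/-- `Δ_i(V) = max (deg V / (δ_{i+1}(V) ⋯ δ_{n-d}(V))) 1`. -/
def Delta (V : Set (Fin n → ℂ)) (i : ℕ) : ℝ :=
  max ((degree n V : ℝ) / ∏ j ∈ Finset.Icc (i + 1) (n - dim n V), (partialDeg n V j : ℝ)) 1

/-- `i` is admissible with respect to `V` if `δ_{i+1}(V) > 2 i δ_i(V)` (with the convention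
`δ_i(V) = ∞` for `i > n - dim V`). -/
def Admissible (V : Set (Fin n → ℂ)) (i : ℕ) : Prop :=
  ((2 * i : ℕ) : ℕ∞) * partialDegE n V i < partialDegE n V (i + 1)

/-- The interval `ℛ_i(V) = [c₁ δ_i(V)^{n-i} Δ_i(V), (c₀/2) δ_{i+1}(V)^{n-i} Δ_i(V)]`,
where `δ_{n-d+1}(V) = ∞` makes the last interval a half-line. -/
def RSet (c0 c1 : ℝ) (V : Set (Fin n → ℂ)) (i : ℕ) : Set ℝ :=
  if i = n - dim n V then
    Set.Ici (c1 * (partialDeg n V i : ℝ) ^ (n - i) * Delta n V i)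
  else
    Set.Icc (c1 * (partialDeg n V i : ℝ) ^ (n - i) * Delta n V i)
      ((c0 / 2) * (partialDeg n V (i + 1) : ℝ) ^ (n - i) * Delta n V i)

/-- The interval `ℛ^l_{s,τ}(V) = [τ δ_s(V)^{n-(s+l)} Δ_s(V), τ δ_{s+1}(V)^{n-(s+l)} Δ_s(V)]`,
where `δ_{n-d+1}(V) = ∞` makes the last interval a half-line. -/
def RlSet (τ : ℝ) (l : ℕ) (V : Set (Fin n → ℂ)) (s : ℕ) : Set ℝ :=
  if s = n - dim n V then
    Set.Ici (τ * (partialDeg n V s : ℝ) ^ (n - (s + l)) * Delta n V s)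
  else
    Set.Icc (τ * (partialDeg n V s : ℝ) ^ (n - (s + l)) * Delta n V s)
      (τ * (partialDeg n V (s + 1) : ℝ) ^ (n - (s + l)) * Delta n V s)

/-- The ideal `I(V)` of polynomials vanishing on `V ⊆ ℂⁿ`. -/
def vanishingIdeal (V : Set (Fin n → ℂ)) : Ideal (MvPolynomial (Fin n) ℂ) where
  carrier := {f | ∀ x ∈ V, eval x f = 0}
  add_mem' := by
    intro a b ha hb x hx
    simp [ha x hx, hb x hx]
  zero_mem' := by
    intro x hx
    simp
  smul_mem' := by
    intro c f hf x hx
    simp [smul_eq_mul, hf x hx]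

/-- The ideal `I_ℝ(V)` of real polynomials vanishing on `V ⊆ ℂⁿ`. -/
def vanishingIdealR (V : Set (Fin n → ℂ)) : Ideal (MvPolynomial (Fin n) ℝ) :=
  (vanishingIdeal n V).comap (MvPolynomial.map (algebraMap ℝ ℂ))

/-- The affine Hilbert function `H_{I(V)}(m) = dim_ℂ ℂ[x]_{≤ m} / I(V)_{≤ m}`, realised as the
dimension of the image of the space of polynomials of total degree at most `m` in the quotient
ring `ℂ[x]/I(V)`. -/
def hilbert (V : Set (Fin n → ℂ)) (m : ℕ) : ℕ :=
  Module.finrank ℂ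
    (Submodule.map (Ideal.Quotient.mkₐ ℂ (vanishingIdeal n V)).toLinearMap
      (restrictTotalDegree (Fin n) ℂ m))

/-- The real affine Hilbert function `H_{I(V),ℝ}(m) = dim_ℝ ℝ[x]_{≤ m} / I_ℝ(V)_{≤ m}`. -/
def hilbertR (V : Set (Fin n → ℂ)) (m : ℕ) : ℕ :=
  Module.finrank ℝ
    (Submodule.map (Ideal.Quotient.mkₐ ℝ (vanishingIdealR n V)).toLinearMap
      (restrictTotalDegree (Fin n) ℝ m))

/-- The inclusion `ℝⁿ → ℂⁿ`. -/
def toC (x : Fin n → ℝ) : Fin n → ℂ := fun i => (x i : ℂ)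

/-- The set of real points of `V ⊆ ℂⁿ`. -/
def realPts (V : Set (Fin n → ℂ)) : Set (Fin n → ℝ) := {x | toC n x ∈ V}

/-- The real zero set of a real polynomial. -/
def zeroSetR (g : MvPolynomial (Fin n) ℝ) : Set (Fin n → ℝ) := {x | eval x g = 0}

/-- The zero locus of the polynomials `P 1, …, P i` (the first `i` members of a tuple of
polynomials indexed from `1`). -/
def zeroLocusUpTo (P : ℕ → MvPolynomial (Fin n) ℂ) (i : ℕ) : Set (Fin n → ℂ) :=
  zeroLocus n {f | ∃ j : ℕ, 1 ≤ j ∧ j ≤ i ∧ f = P j}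

/-- `V'` is an `(n-s)`-minimal variety of the irreducible variety `V`. -/
def IsMinimalVariety (V V' : Set (Fin n → ℂ)) (s : ℕ) : Prop :=
  IsIrredVariety n V' ∧ V ⊆ V' ∧ dim n V' = n - s ∧
    ∀ f ∈ vanishingIdeal n V, f ∉ vanishingIdeal n V' →
      partialDegE n V (s + 1) ≤ (f.totalDegree : ℕ∞)

/-- `S` is `(k,b)`-free with respect to `T`, for the incidence relation `R`. -/
def KBFree {α β : Type*} (R : α → β → Prop) (S : Finset α) (T : Finset β) (k b : ℕ) : Prop :=
  ¬ ∃ (P : Finset α) (B : Finset β), P ⊆ S ∧ B ⊆ T ∧ P.card = k ∧ B.card = b ∧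
      ∀ s ∈ P, ∀ t ∈ B, R s t

/-- The number of incidences between a finite set of points and a finite family of sets. -/
def incCountAbs {α : Type*} (S : Finset α) (T : Finset (Set α)) : ℕ :=
  ∑ t ∈ T, (↑S ∩ t).ncard

/-- The number of incidences between a finite set of real points and a finite family of
subsets of `ℂⁿ`. -/
def incCount (S : Finset (Fin n → ℝ)) (T : Finset (Set (Fin n → ℂ))) : ℕ :=
  ∑ t ∈ T, (↑S ∩ toC n ⁻¹' t).ncard

/-- The total degree `deg T = ∑_{t ∈ T} deg t` of a finite family of algebraic sets. -/
def degFamily (T : Finset (Set (Fin n → ℂ))) : ℕ := ∑ t ∈ T, degreeSum n t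

/-- The total degree of a finite family of irreducible varieties. -/
def degFamilyIrred (T : Finset (Set (Fin n → ℂ))) : ℕ := ∑ t ∈ T, degree n t

/-- `α_k(d)`. -/
def alpha (k d : ℕ) : ℝ :=
  if k = 1 ∧ d = 1 then 0 else (k : ℝ) * ((d : ℝ) - 1) / ((d : ℝ) * (k : ℝ) - 1)

/-- `β_k(d)`. -/
def beta (k d : ℕ) : ℝ :=
  if k = 1 ∧ d = 1 then 1 else (d : ℝ) * ((k : ℝ) - 1) / ((d : ℝ) * (k : ℝ) - 1)

/-- `τ_d(b,k) = b^{1-β_k(d)} k^{1-α_k(d)}`. -/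
def tauC (d b k : ℕ) : ℝ := (b : ℝ) ^ (1 - beta k d) * (k : ℝ) ^ (1 - alpha k d)

/-- The Chardin–Philippon property of the constant `c₀`: for every pure-dimensional algebraic
set `W ⊆ ℂⁿ` and every `m ≥ 2 (n - dim W) δ(W)` one has `H_{I(W)}(m) ≥ c₀ m^{dim W} deg W`. -/
def ChardinPhilippon (c0 : ℝ) : Prop :=
  ∀ (W : Set (Fin n → ℂ)) (e : ℕ), IsAlgSetOfDim n W e →
    ∀ m : ℕ, 2 * (n - e) * deltaSet n W ≤ m →
      c0 * (m : ℝ) ^ e * (degreeSum n W : ℝ) ≤ (hilbert n W m : ℝ)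

/-- The defining property of the constant `c₁`: for every irreducible variety `V`, every
positive integer lies in some interval `ℛ_i(V)` with `i` admissible with respect to `V`. -/
def CoversPositiveIntegers (c0 c1 : ℝ) : Prop :=
  ∀ V : Set (Fin n → ℂ), IsIrredVariety n V →
    ∀ m : ℕ, 0 < m → ∃ i, Admissible n V i ∧ (m : ℝ) ∈ RSet n c0 c1 V i

/-- `i_V(M)`: the smallest admissible `i` such that `M^{n-i} Δ_i(V) ∈ ℛ_i(V)`. -/
def iV (c0 c1 : ℝ) (V : Set (Fin n → ℂ)) (M : ℕ) : ℕ :=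
  sInf {i | Admissible n V i ∧ (M : ℝ) ^ (n - i) * Delta n V i ∈ RSet n c0 c1 V i}

/-- A real polynomial bisects a finite set `S ⊆ ℝⁿ` if it is positive on at most half of `S`
and negative on at most half of `S`. -/
def Bisects (g : MvPolynomial (Fin n) ℝ) (S : Finset (Fin n → ℝ)) : Prop :=
  ((↑S ∩ {x | 0 < eval x g}).ncard : ℝ) ≤ (S.card : ℝ) / 2 ∧
    ((↑S ∩ {x | eval x g < 0}).ncard : ℝ) ≤ (S.card : ℝ) / 2

/-- The set of `r`-rich points of a family `T`: points lying in at least `r` members of `T`. -/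
def richPts (T : Finset (Set (Fin n → ℂ))) (r : ℕ) : Set (Fin n → ℂ) :=
  {x | r ≤ ({t | t ∈ T ∧ x ∈ t} : Set (Set (Fin n → ℂ))).ncard}

/-- A real hypersurface of degree at most `D`: the real zero set of a nonzero real polynomial
of degree at most `D`. -/
def IsRealHypersurfaceDegLE (t : Set (Fin n → ℝ)) (D : ℕ) : Prop :=
  ∃ p : MvPolynomial (Fin n) ℝ, p ≠ 0 ∧ t = zeroSetR n p ∧ p.totalDegree ≤ D

/-- Lexicographic comparison of the tuples `(f 1, …, f m)` and `(g 1, …, g m)`. -/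
def LexLE (m : ℕ) (f g : ℕ → ℕ) : Prop :=
  (∀ j ∈ Finset.Icc 1 m, f j = g j) ∨
    ∃ i ∈ Finset.Icc 1 m, (∀ j, 1 ≤ j → j < i → f j = g j) ∧ f i < g i



theorem Alg.maxHeight (s : ℕ) (m : Ideal (MvPolynomial (Fin s) ℂ)) (hm : m.IsMaximal) :
    (m.height : WithBot ℕ∞) = ringKrullDim (MvPolynomial (Fin s) ℂ) := by
  have : FiniteRingKrullDim (MvPolynomial (Fin s) ℂ) := by
    rw [finiteRingKrullDim_iff_ne_bot_and_top]
    simp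
    exact WithBot.coe_injective.ne (ENat.natCast_ne_top s)
  obtain ⟨m', hm', h⟩ := Ideal.exists_isMaximal_height (R := MvPolynomial (Fin s) ℂ)
  rw [← h]
  obtain ⟨x, rfl⟩ := isMaximal_iff_eq_vanishingIdeal_singleton.1 hm
  obtain ⟨y, rfl⟩ := isMaximal_iff_eq_vanishingIdeal_singleton.1 hm'
  let F : (Fin s → ℂ) → MvPolynomial (Fin s) ℂ →ₐ[ℂ] MvPolynomial (Fin s) ℂ :=
    fun c => aeval (fun i => X i + C (c i))
  have hF : ∀ c, (F c).comp (F (-c)) = AlgHom.id _ _ := by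
    intro c
    ext i
    simp [F]
  let e : MvPolynomial (Fin s) ℂ ≃ₐ[ℂ] MvPolynomial (Fin s) ℂ :=
    AlgEquiv.ofAlgHom (F (y - x)) (F (-(y-x))) (hF _) (by simpa using hF (-(y-x)))
  have := e.toRingEquiv.height_comap (MvPolynomial.vanishingIdeal ℂ {x})
  rw [← this]
  congr 2
  ext f
  simp only [Ideal.mem_comap, mem_vanishingIdeal_singleton_iff]
  have h2 : (aeval x).comp (F (y - x)) = aeval y := by
    ext i
    simp [F]
  rw [← h2]
  rfl

theorem Alg.dimLE {A B : Type*} [CommRing A] [CommRing B] [Algebra B A] [Algebra.IsIntegral B A] :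
    ringKrullDim A ≤ ringKrullDim B := by
  refine Order.krullDim_le_of_strictMono (PrimeSpectrum.comap (algebraMap B A)) ?_
  intro p q h
  exact Ideal.IsIntegral.comap_lt_comap (R := B) (A := A) (I := p.asIdeal) (J := q.asIdeal) h

theorem Alg.dimGE {A B : Type*} [CommRing A] [CommRing B] [Algebra B A] [Algebra.IsIntegral B A]
    [FaithfulSMul B A] :
    ringKrullDim B ≤ ringKrullDim A := by
  refine iSup_le fun l => ?_
  obtain ⟨Q, -, hQ1, hQ2⟩ := Ideal.exists_ideal_over_prime_of_isIntegral (S := A) l.head.asIdeal ⊥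
    (by
      change RingHom.ker (algebraMap B A) ≤ _
      rw [(RingHom.injective_iff_ker_eq_bot _).1 (FaithfulSMul.algebraMap_injective B A)]
      exact bot_le)
  have : Q.LiesOver l.head.asIdeal := ⟨hQ2.symm⟩
  obtain ⟨L, hL, -⟩ := Ideal.exists_ltSeries_of_hasGoingUp l Q
  rw [← hL]
  exact le_iSup (fun p : LTSeries (PrimeSpectrum A) => (p.length : WithBot ℕ∞)) L

theorem Alg.key {A : Type*} [CommRing A] [IsDomain A] [Algebra ℂ A] [Algebra.FiniteType ℂ A]
    (q : Ideal A) [q.IsPrime] (hq : q.height ≤ 1) (hq0 : q ≠ ⊥) :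
    ringKrullDim A ≤ ringKrullDim (A ⧸ q) + 1 := by
  obtain ⟨s, g, hg, hi⟩ := exists_integral_inj_algHom_of_fg ℂ A
  algebraize [g.toRingHom]
  have hi : Algebra.IsIntegral (MvPolynomial (Fin s) ℂ) A := ⟨hi⟩
  have : FaithfulSMul (MvPolynomial (Fin s) ℂ) A := (faithfulSMul_iff_algebraMap_injective _ _).2 hg
  let p := q.under (MvPolynomial (Fin s) ℂ)
  have hp0 : p ≠ ⊥ := fun h => hq0 (Ideal.eq_bot_of_comap_eq_bot h)
  have hp1 : p.height = 1 := by
    apply le_antisymm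
    · refine le_trans ?_ hq
      have : IsNoetherianRing A := Algebra.FiniteType.isNoetherianRing ℂ A
      rw [Ideal.height_eq_height_add_of_liesOver_of_hasGoingDown p q]
      exact le_self_add
    · rw [Order.one_le_iff_ne_zero]
      rwa [Ne, Ideal.height_eq_zero_iff_eq_bot]
  obtain ⟨⟨f, hf⟩⟩ := UniqueFactorizationMonoid.isPrincipal_of_height_eq_one hp1
  obtain ⟨m, hm, hpm⟩ := Ideal.exists_le_maximal p (Ideal.IsPrime.ne_top inferInstance)
  have h1 := Ideal.height_le_ringKrullDim_quotient_add_one (r := f) (p := m) (hpm (by rw [hf]; exact Submodule.mem_span_singleton_self f))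
  rw [Alg.maxHeight s m hm] at h1
  refine (Alg.dimLE (B := MvPolynomial (Fin s) ℂ)).trans (h1.trans ?_)
  gcongr
  have h2 : Ideal.span {f} = p := hf.symm
  rw [h2]
  exact Alg.dimGE

theorem Alg.key2 {n : ℕ} (p q : Ideal (MvPolynomial (Fin n) ℂ)) [hp : p.IsPrime] (f : MvPolynomial (Fin n) ℂ)
    (hf : f ∉ p) (hq : q ∈ (p ⊔ Ideal.span {f}).minimalPrimes) :
    ringKrullDim (MvPolynomial (Fin n) ℂ ⧸ p) ≤ ringKrullDim (MvPolynomial (Fin n) ℂ ⧸ q) + 1 := by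
  have h := Ideal.map_height_le_one_of_mem_minimalPrimes hq
  have : q.IsPrime := hq.1.1
  have hpq : p ≤ q := le_sup_left.trans hq.1.2
  have : (q.map (Ideal.Quotient.mk p)).IsPrime := Ideal.isPrime_map_quotientMk_of_isPrime hpq
  refine (Alg.key _ h ?_).trans (le_of_eq ?_)
  · intro h0
    have hfq : f ∈ q := (le_sup_right.trans hq.1.2) (Ideal.mem_span_singleton_self f)
    have := Ideal.mem_map_of_mem (Ideal.Quotient.mk p) hfq
    rw [h0, Ideal.mem_bot, Ideal.Quotient.eq_zero_iff_mem] at this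
    exact hf this
  · congr 1
    exact ringKrullDim_eq_of_ringEquiv (DoubleQuot.quotQuotEquivQuotOfLE hpq)
section Aux

variable {n : ℕ}

theorem aux_mem {V : Set (Fin n → ℂ)} {f : MvPolynomial (Fin n) ℂ} :
    f ∈ vanishingIdeal n V ↔ ∀ x ∈ V, eval x f = 0 := Iff.rfl

theorem aux_zl_eq (I : Ideal (MvPolynomial (Fin n) ℂ)) :
    zeroLocus n (I : Set (MvPolynomial (Fin n) ℂ)) = MvPolynomial.zeroLocus ℂ I := by
  ext x
  simp [zeroLocus, MvPolynomial.mem_zeroLocus_iff, MvPolynomial.aeval_eq_eval]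

theorem aux_vi_eq (V : Set (Fin n → ℂ)) :
    vanishingIdeal n V = MvPolynomial.vanishingIdeal ℂ V := by
  ext x
  simp [aux_mem, MvPolynomial.mem_vanishingIdeal_iff, MvPolynomial.aeval_eq_eval]

theorem aux_vi_anti {V W : Set (Fin n → ℂ)} (h : V ⊆ W) :
    vanishingIdeal n W ≤ vanishingIdeal n V := fun _ hf x hx => hf x (h hx)

theorem aux_zl_anti {I J : Set (MvPolynomial (Fin n) ℂ)} (h : I ⊆ J) :
    zeroLocus n J ⊆ zeroLocus n I := fun _ hx f hf => hx f (h hf)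

theorem aux_sub_zl_vi (V : Set (Fin n → ℂ)) :
    V ⊆ zeroLocus n (vanishingIdeal n V : Set (MvPolynomial (Fin n) ℂ)) :=
  fun _ hx _ hf => hf _ hx

theorem aux_zl_vi {V : Set (Fin n → ℂ)} (h : IsAlgebraicSet n V) :
    zeroLocus n (vanishingIdeal n V : Set (MvPolynomial (Fin n) ℂ)) = V := by
  obtain ⟨I, rfl⟩ := h
  refine Subset.antisymm (aux_zl_anti ?_) (aux_sub_zl_vi _)
  intro f hf x hx
  exact hx f hf

theorem aux_vi_zl (p : Ideal (MvPolynomial (Fin n) ℂ)) [p.IsPrime] :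
    vanishingIdeal n (zeroLocus n (p : Set (MvPolynomial (Fin n) ℂ))) = p := by
  rw [aux_vi_eq, aux_zl_eq, MvPolynomial.IsPrime.vanishingIdeal_zeroLocus]

theorem aux_prime {V : Set (Fin n → ℂ)} (h : IsIrredVariety n V) :
    (vanishingIdeal n V).IsPrime := by
  obtain ⟨-, ⟨x, hx⟩, hV⟩ := h
  refine ⟨?_, ?_⟩
  · rw [Ideal.ne_top_iff_one]
    intro h1
    simpa using h1 x hx
  · intro f g hfg
    have := hV (zeroLocus n {f}) (zeroLocus n {g}) ⟨_, rfl⟩ ⟨_, rfl⟩ (by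
      intro y hy
      have := hfg y hy
      rw [map_mul, mul_eq_zero] at this
      simpa [zeroLocus] using this)
    refine this.imp ?_ ?_ <;>
    · intro h y hy
      simpa [zeroLocus] using h hy

theorem aux_irred (p : Ideal (MvPolynomial (Fin n) ℂ)) [hp : p.IsPrime] :
    IsIrredVariety n (zeroLocus n (p : Set (MvPolynomial (Fin n) ℂ))) := by
  refine ⟨⟨_, rfl⟩, ?_, ?_⟩
  · rw [Set.nonempty_iff_ne_empty]
    intro h
    apply hp.ne_top
    rw [← aux_vi_zl p, h, Ideal.eq_top_iff_one]
    intro x hx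
    exact absurd hx (by simp)
  · rintro V₁ V₂ ⟨I₁, rfl⟩ ⟨I₂, rfl⟩ h
    by_contra! hc
    obtain ⟨h1, h2⟩ := hc
    rw [Set.not_subset] at h1 h2
    obtain ⟨x, hx, hx'⟩ := h1
    obtain ⟨y, hy, hy'⟩ := h2
    simp only [zeroLocus, mem_setOf_eq, not_forall] at hx' hy'
    obtain ⟨f, hf, hfx⟩ := hx'
    obtain ⟨g, hg, hgy⟩ := hy'
    have hfg : f * g ∈ p := by
      rw [← aux_vi_zl p]
      intro z hz
      rw [map_mul]
      rcases h hz with h | h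
      · rw [h f hf, zero_mul]
      · rw [h g hg, mul_zero]
    rcases hp.mem_or_mem hfg with h | h
    · exact hfx (hx f h)
    · exact hgy (hy g h)

theorem aux_le_iff {V W : Set (Fin n → ℂ)} (hW : IsAlgebraicSet n W) :
    vanishingIdeal n W ≤ vanishingIdeal n V ↔ V ⊆ W := by
  refine ⟨fun h => ?_, aux_vi_anti⟩
  rw [← aux_zl_vi hW]
  exact (aux_sub_zl_vi V).trans (aux_zl_anti h)

theorem aux_chain {W : Set (Fin n → ℂ)} (hW : IsIrredVariety n W) (d : ℕ) :
    HasChain n W d ↔ ∃ l : LTSeries (PrimeSpectrum.zeroLocus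
      (vanishingIdeal n W : Set (MvPolynomial (Fin n) ℂ))), l.length = d := by
  constructor
  · rintro ⟨C, h1, h2, h3⟩
    refine ⟨⟨d, fun i => ⟨⟨vanishingIdeal n (C i.rev), aux_prime (h1 _)⟩, ?_⟩, ?_⟩, rfl⟩
    · rw [PrimeSpectrum.mem_zeroLocus]
      apply aux_vi_anti
      refine Subset.trans ?_ h3
      rcases eq_or_ne i.rev (Fin.last d) with h | h
      · rw [h]
      · exact (h2 _ _ (lt_of_le_of_ne (Fin.le_last _) h)).1
    · intro i
      have := h2 i.succ.rev i.castSucc.rev (by simp)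
      change vanishingIdeal n _ < vanishingIdeal n _
      refine lt_of_le_not_ge (aux_vi_anti this.1) ?_
      rw [aux_le_iff (h1 _).1]
      exact this.2
  · rintro ⟨l, rfl⟩
    have hpr : ∀ i, (l i).1.asIdeal.IsPrime := fun i => (l i).1.isPrime
    refine ⟨fun i => zeroLocus n ((l i.rev).1.asIdeal : Set _), fun i => aux_irred _, ?_, ?_⟩
    · intro i j hij
      have hlt : (l j.rev).1.asIdeal < (l i.rev).1.asIdeal := l.strictMono (by simpa using hij)
      refine ⟨aux_zl_anti hlt.1, fun h => hlt.2 ?_⟩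
      have := aux_vi_anti h
      rwa [aux_vi_zl, aux_vi_zl] at this
    · exact (aux_zl_anti (l _).2).trans (aux_zl_vi hW.1).subset

theorem aux_dim {W : Set (Fin n → ℂ)} (hW : IsIrredVariety n W) :
    ringKrullDim (MvPolynomial (Fin n) ℂ ⧸ vanishingIdeal n W) = (dim n W : WithBot ℕ∞) := by
  have hp := aux_prime hW
  have h0 : 0 ≤ ringKrullDim (MvPolynomial (Fin n) ℂ ⧸ vanishingIdeal n W) :=
    ringKrullDim_nonneg_of_nontrivial
  have h1 : ringKrullDim (MvPolynomial (Fin n) ℂ ⧸ vanishingIdeal n W) ≤ (n : WithBot ℕ∞) := by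
    refine (ringKrullDim_quotient_le _).trans ?_
    simp
  obtain ⟨m, hm⟩ : ∃ m : ℕ, ringKrullDim (MvPolynomial (Fin n) ℂ ⧸ vanishingIdeal n W)
      = (m : WithBot ℕ∞) := by
    generalize ringKrullDim (MvPolynomial (Fin n) ℂ ⧸ vanishingIdeal n W) = k at h0 h1
    induction k with
    | bot => simp at h0
    | coe k =>
      have h1 : k ≤ (n : ℕ∞) := by exact_mod_cast h1
      obtain ⟨m, rfl⟩ := ENat.ne_top_iff_exists.1 (ne_top_of_le_ne_top (ENat.natCast_ne_top n) h1)
      exact ⟨m, rfl⟩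
  have hc : {d | HasChain n W d} = Set.Iic m := by
    ext d
    rw [mem_setOf_eq, aux_chain hW, ← Order.le_krullDim_iff, ← ringKrullDim_quotient, hm]
    simp
  rw [hm, dim, hc, csSup_Iic]

theorem aux_dim_lt {W W' : Set (Fin n → ℂ)} (hW : IsIrredVariety n W) (hW' : IsIrredVariety n W')
    (h : W ⊂ W') : dim n W < dim n W' := by
  have hp := aux_prime hW
  have hp' := aux_prime hW'
  have hle := aux_vi_anti h.1
  obtain ⟨f, hf, hf'⟩ : ∃ f ∈ vanishingIdeal n W, f ∉ vanishingIdeal n W' := by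
    rw [← SetLike.not_le_iff_exists, aux_le_iff hW.1]
    exact h.2
  have := ringKrullDim_succ_le_of_surjective (r := Ideal.Quotient.mk (vanishingIdeal n W') f)
    (Ideal.Quotient.factor hle) (Ideal.Quotient.factor_surjective hle)
    (by
      rw [mem_nonZeroDivisors_iff_ne_zero, Ne, Ideal.Quotient.eq_zero_iff_mem]
      exact hf')
    (by simpa [Ideal.Quotient.eq_zero_iff_mem] using hf)
  rw [aux_dim hW, aux_dim hW'] at this
  have : dim n W + 1 ≤ dim n W' := by exact_mod_cast this
  omega

theorem aux_dim_le {W W' : Set (Fin n → ℂ)} (hW : IsIrredVariety n W) (hW' : IsIrredVariety n W')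
    (h : W ⊆ W') : dim n W ≤ dim n W' := by
  rcases h.eq_or_ssubset with rfl | h
  · rfl
  · exact (aux_dim_lt hW hW' h).le

theorem aux_eq_of_dim {W W' : Set (Fin n → ℂ)} (hW : IsIrredVariety n W)
    (hW' : IsIrredVariety n W') (h : W ⊆ W') (hd : dim n W' ≤ dim n W) : W = W' := by
  rcases h.eq_or_ssubset with rfl | h
  · rfl
  · exact absurd (aux_dim_lt hW hW' h) (by omega)

theorem aux_univ : IsIrredVariety n (univ : Set (Fin n → ℂ)) ∧
    vanishingIdeal n (univ : Set (Fin n → ℂ)) = ⊥ := by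
  have : zeroLocus n ((⊥ : Ideal (MvPolynomial (Fin n) ℂ)) : Set (MvPolynomial (Fin n) ℂ)) = univ := by
    ext x; simp [zeroLocus]
  have hp : (⊥ : Ideal (MvPolynomial (Fin n) ℂ)).IsPrime := Ideal.isPrime_bot
  rw [← this]
  exact ⟨aux_irred _, aux_vi_zl _⟩

theorem aux_dim_univ : dim n (univ : Set (Fin n → ℂ)) = n := by
  have := aux_dim (aux_univ (n := n)).1
  rw [aux_univ.2, ringKrullDim_eq_of_ringEquiv (RingEquiv.quotientBot _)] at this
  simp at this
  exact_mod_cast this.symm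

theorem aux_dim_le_n {W : Set (Fin n → ℂ)} (hW : IsIrredVariety n W) : dim n W ≤ n := by
  have := aux_dim_le hW aux_univ.1 (subset_univ W)
  rwa [aux_dim_univ] at this

theorem aux_cut {V W : Set (Fin n → ℂ)} (hV : IsIrredVariety n V) (hW : IsIrredVariety n W)
    (h : V ⊆ W) (f : MvPolynomial (Fin n) ℂ) (hf : f ∈ vanishingIdeal n V)
    (hf' : f ∉ vanishingIdeal n W) :
    ∃ W', IsIrredVariety n W' ∧ V ⊆ W' ∧ W' ⊆ W ∧ f ∈ vanishingIdeal n W' ∧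
      dim n W' + 1 = dim n W := by
  have hp := aux_prime hW
  have hpV := aux_prime hV
  have hle : vanishingIdeal n W ⊔ Ideal.span {f} ≤ vanishingIdeal n V := by
    refine sup_le (aux_vi_anti h) ?_
    rwa [Ideal.span_singleton_le_iff_mem]
  obtain ⟨q, hq, hqV⟩ := Ideal.exists_minimalPrimes_le hle
  have hqp : q.IsPrime := hq.1.1
  have hk := Alg.key2 _ q f hf' hq
  have hWq : vanishingIdeal n W ≤ q := le_sup_left.trans hq.1.2
  have hfq : f ∈ q := (le_sup_right.trans hq.1.2) (Ideal.mem_span_singleton_self f)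
  have hsub : zeroLocus n (q : Set (MvPolynomial (Fin n) ℂ)) ⊆ W := by
    rw [← aux_zl_vi hW.1]
    exact aux_zl_anti hWq
  have hfz : f ∈ vanishingIdeal n (zeroLocus n (q : Set (MvPolynomial (Fin n) ℂ))) := by
    rwa [aux_vi_zl]
  have hirr := aux_irred q
  refine ⟨_, hirr, ?_, hsub, hfz, ?_⟩
  · rw [← aux_zl_vi hV.1]
    exact aux_zl_anti hqV
  · have hd := aux_dim hirr
    rw [aux_vi_zl] at hd
    rw [hd, aux_dim hW] at hk
    have h1 : dim n W ≤ dim n (zeroLocus n (q : Set (MvPolynomial (Fin n) ℂ))) + 1 := by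
      exact_mod_cast hk
    have h2 := aux_dim_lt hirr hW ⟨hsub, fun hh => hf' (aux_vi_anti hh hfz)⟩
    omega

theorem aux_descend {V : Set (Fin n → ℂ)} (hV : IsIrredVariety n V) (k : ℕ) (hk : dim n V ≤ k)
    (j : ℕ) : ∀ W, IsIrredVariety n W → V ⊆ W → dim n W = k + j →
    ∃ W', IsIrredVariety n W' ∧ V ⊆ W' ∧ W' ⊆ W ∧ dim n W' = k := by
  induction j with
  | zero => exact fun W h1 h2 h3 => ⟨W, h1, h2, Subset.rfl, h3⟩
  | succ j ih =>
    intro W h1 h2 h3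
    obtain ⟨f, hf, hf'⟩ : ∃ f ∈ vanishingIdeal n V, f ∉ vanishingIdeal n W := by
      rw [← SetLike.not_le_iff_exists, aux_le_iff hV.1]
      intro h
      have := aux_dim_le h1 hV h
      omega
    obtain ⟨W1, g1, g2, g3, -, g5⟩ := aux_cut hV h1 h2 f hf hf'
    obtain ⟨W', k1, k2, k3, k4⟩ := ih W1 g1 g2 (by omega)
    exact ⟨W', k1, k2, k3.trans g3, k4⟩

theorem aux_comp {X W : Set (Fin n → ℂ)} (hW : IsIrredVariety n W) (h : W ⊆ X) :
    ∃ W', IsIrredComponent n W' X ∧ W ⊆ W' := by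
  classical
  let p : ℕ → Prop := fun k => ∃ W', IsIrredVariety n W' ∧ W ⊆ W' ∧ W' ⊆ X ∧ dim n W' = k
  have h0 : p (dim n W) := ⟨W, hW, Subset.rfl, h, rfl⟩
  obtain ⟨W', h1, h2, h3, h4⟩ := Nat.findGreatest_spec (P := p) (aux_dim_le_n hW) h0
  refine ⟨W', ⟨h1, h3, ?_⟩, h2⟩
  intro W'' g1 g2 g3
  have := Nat.le_findGreatest (P := p) (aux_dim_le_n g1) ⟨W'', g1, h2.trans g2, g3, rfl⟩
  exact (aux_eq_of_dim h1 g1 g2 (by omega)).symm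

theorem aux_finite {X : Set (Fin n → ℂ)} (hX : IsAlgebraicSet n X) :
    {W | IsIrredComponent n W X}.Finite := by
  refine Set.Finite.of_injOn (f := fun W => vanishingIdeal n W) (t := (vanishingIdeal n X).minimalPrimes)
    ?_ ?_ (Ideal.finite_minimalPrimes_of_isNoetherianRing _ _)
  · rintro W ⟨h1, h2, h3⟩
    refine ⟨⟨aux_prime h1, aux_vi_anti h2⟩, ?_⟩
    rintro q ⟨hq1, hq2⟩ hq3
    have := h3 (zeroLocus n (q : Set (MvPolynomial (Fin n) ℂ))) (aux_irred q)
      (by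
        rw [← aux_zl_vi h1.1]
        exact aux_zl_anti hq3)
      (by
        rw [← aux_zl_vi hX]
        exact aux_zl_anti hq2)
    simp only
    rw [← this, aux_vi_zl]
  · rintro W ⟨h1, -⟩ W' ⟨h1', -⟩ h
    simp only at h
    rw [← aux_zl_vi h1.1, h, aux_zl_vi h1'.1]

theorem aux_max {X V : Set (Fin n → ℂ)} {e : ℕ} : MaxCompDimEq n X V e ↔
    (∃ W, IsIrredVariety n W ∧ V ⊆ W ∧ W ⊆ X ∧ dim n W = e) ∧
      ∀ W, IsIrredVariety n W → V ⊆ W → W ⊆ X → dim n W ≤ e := by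
  have key : (∀ W, IsIrredComponent n W X → V ⊆ W → dim n W ≤ e) ↔
      ∀ W, IsIrredVariety n W → V ⊆ W → W ⊆ X → dim n W ≤ e := by
    constructor
    · intro h W h1 h2 h3
      obtain ⟨W', g1, g2⟩ := aux_comp h1 h3
      exact (aux_dim_le h1 g1.1 g2).trans (h W' g1 (h2.trans g2))
    · intro h W h1 h2
      exact h W h1.1 h2 h1.2.1
  unfold MaxCompDimEq
  rw [key]
  refine and_congr_left fun hle => ⟨?_, ?_⟩
  · rintro ⟨W, h1, h2, h3⟩
    exact ⟨W, h1.1, h2, h1.2.1, h3⟩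
  · rintro ⟨W, h1, h2, h3, h4⟩
    obtain ⟨W', g1, g2⟩ := aux_comp h1 h3
    have := hle W' g1.1 (h2.trans g2) g1.2.1
    have := aux_eq_of_dim h1 g1.1 g2 (by omega)
    exact ⟨W', g1, h2.trans g2, this ▸ h4⟩

theorem aux_step {X V : Set (Fin n → ℂ)} {e m : ℕ} (hX : IsAlgebraicSet n X)
    (hmax : ∀ W, IsIrredVariety n W → V ⊆ W → W ⊆ X → dim n W ≤ e)
    (hm : ∀ W, IsIrredVariety n W → V ⊆ W → dim n W = e →
      ∃ f ∈ vanishingIdeal n V, f.totalDegree ≤ m ∧ f ∉ vanishingIdeal n W) :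
    ∃ f ∈ vanishingIdeal n V, f.totalDegree ≤ m ∧
      ∀ W, IsIrredVariety n W → V ⊆ W → W ⊆ X → f ∈ vanishingIdeal n W → dim n W < e := by
  let E : Submodule ℂ (MvPolynomial (Fin n) ℂ) :=
    (vanishingIdeal n V).restrictScalars ℂ ⊓ restrictTotalDegree (Fin n) ℂ m
  have hE : ∀ f, f ∈ E ↔ f ∈ vanishingIdeal n V ∧ f.totalDegree ≤ m := by
    intro f
    simp [E, mem_restrictTotalDegree]
  let T : Set (Set (Fin n → ℂ)) := {W | IsIrredComponent n W X ∧ V ⊆ W ∧ dim n W = e}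
  have hT : T.Finite := (aux_finite hX).subset fun W h => h.1
  have : Finite T := hT
  let p : T → Subspace ℂ E := fun W => ((vanishingIdeal n W.1).restrictScalars ℂ).comap E.subtype
  have hne : ⋃ i, (p i : Set E) ≠ Set.univ := by
    intro h
    obtain ⟨⟨W, hW1, hW2, hW3⟩, hW⟩ := Subspace.exists_eq_top_of_iUnion_eq_univ h
    obtain ⟨f, hf1, hf2, hf3⟩ := hm W hW1.1 hW2 hW3
    have : (⟨f, (hE f).2 ⟨hf1, hf2⟩⟩ : E) ∈ p ⟨W, hW1, hW2, hW3⟩ := by rw [hW]; trivial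
    exact hf3 this
  rw [Set.ne_univ_iff_exists_notMem] at hne
  obtain ⟨⟨f, hfE⟩, hf⟩ := hne
  refine ⟨f, ((hE f).1 hfE).1, ((hE f).1 hfE).2, ?_⟩
  intro W h1 h2 h3 h4
  refine lt_of_le_of_ne (hmax W h1 h2 h3) fun h5 => hf ?_
  rw [Set.mem_iUnion]
  refine ⟨⟨W, ⟨h1, h3, ?_⟩, h2, h5⟩, h4⟩
  intro W' g1 g2 g3
  exact (aux_eq_of_dim h1 g1 g2 (by rw [h5]; exact hmax W' g1 (h2.trans g2) g3)).symm

end Aux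

section Combi
variable {n : ℕ}

/-- Polynomials of degree at most `m` in `I(V)` cut the dimension down to `n - i`. -/
def Good (V : Set (Fin n → ℂ)) (m i : ℕ) : Prop :=
  ∀ W, IsIrredVariety n W → V ⊆ W →
    (∀ f ∈ vanishingIdeal n V, f.totalDegree ≤ m → f ∈ vanishingIdeal n W) → dim n W ≤ n - i

theorem good_anti {V : Set (Fin n → ℂ)} {m i j : ℕ} (h : Good V m i) (hj : j ≤ i) :
    Good V m j := fun W h1 h2 h3 => (h W h1 h2 h3).trans (by omega)

theorem good_exists {V : Set (Fin n → ℂ)} (hV : IsIrredVariety n V) :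
    ∃ m, Good V m (n - dim n V) := by
  obtain ⟨S, hS⟩ := IsNoetherian.noetherian (vanishingIdeal n V)
  refine ⟨S.sup MvPolynomial.totalDegree, fun W h1 h2 h3 => ?_⟩
  have hle : vanishingIdeal n V ≤ vanishingIdeal n W := by
    rw [← hS]
    refine Submodule.span_le.2 fun f hf => h3 f ?_ ?_
    · rw [← hS]; exact Submodule.subset_span hf
    · exact Finset.le_sup (f := MvPolynomial.totalDegree) hf
  have := aux_dim_le h1 hV ((aux_le_iff hV.1).1 hle)
  have := aux_dim_le_n hV
  omega

theorem good_hm {V : Set (Fin n → ℂ)} {m i : ℕ} (h : Good V m i) {e : ℕ} (he : n - i < e) :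
    ∀ W, IsIrredVariety n W → V ⊆ W → dim n W = e →
      ∃ f ∈ vanishingIdeal n V, f.totalDegree ≤ m ∧ f ∉ vanishingIdeal n W := by
  intro W h1 h2 h3
  by_contra hc
  push Not at hc
  have := h W h1 h2 hc
  omega

theorem good_iff {V : Set (Fin n → ℂ)} (hV : IsIrredVariety n V) {i m : ℕ}
    (hi : i ≤ n - dim n V) :
    (∃ I : Finset (MvPolynomial (Fin n) ℂ),
    (∀ f ∈ I, f.totalDegree ≤ m) ∧ V ⊆ zeroLocus n ↑I ∧
      MaxCompDimEq n (zeroLocus n ↑I) V (n - i)) ↔ Good V m i := by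
  classical
  constructor
  · rintro ⟨I, h1, h2, h3⟩ W hW hVW hf
    refine (aux_max.1 h3).2 W hW hVW fun x hx f hfI => ?_
    exact hf f (fun y hy => h2 hy f hfI) (h1 f hfI) x hx
  · intro hG
    suffices H : ∀ j ≤ i, ∃ I : Finset (MvPolynomial (Fin n) ℂ),
        (∀ f ∈ I, f.totalDegree ≤ m) ∧ V ⊆ zeroLocus n ↑I ∧
        MaxCompDimEq n (zeroLocus n ↑I) V (n - j) from H i le_rfl
    intro j
    induction j with
    | zero =>
      intro _
      refine ⟨∅, by simp, by intro x _; simp [zeroLocus], aux_max.2 ⟨⟨univ, aux_univ.1,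
        subset_univ _, by intro x _; simp [zeroLocus], by simp [aux_dim_univ]⟩,
        fun W hW _ _ => by simpa using aux_dim_le_n hW⟩⟩
    | succ j ih =>
      intro hj
      obtain ⟨I, h1, h2, h3⟩ := ih (by omega)
      obtain ⟨⟨W, hW, hVW, hWX, hdW⟩, hmax⟩ := aux_max.1 h3
      have hn := aux_dim_le_n hV
      obtain ⟨f, hf, hfm, hlt⟩ := aux_step ⟨_, rfl⟩ hmax (good_hm hG (by omega))
      have hsub : ∀ Y : Set (Fin n → ℂ), Y ⊆ zeroLocus n ↑(insert f I) ↔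
          Y ⊆ zeroLocus n ↑I ∧ f ∈ vanishingIdeal n Y := by
        intro Y
        constructor
        · intro h
          exact ⟨fun x hx g hg => h hx g (by simp [Finset.mem_coe.1 hg]),
            fun x hx => h hx f (by simp)⟩
        · rintro ⟨h, h'⟩ x hx g hg
          rcases Finset.mem_insert.1 (Finset.mem_coe.1 hg) with rfl | hg
          · exact h' x hx
          · exact h hx g hg
      refine ⟨insert f I, ?_, (hsub V).2 ⟨h2, hf⟩, aux_max.2 ⟨?_, ?_⟩⟩
      · intro g hg
        rcases Finset.mem_insert.1 hg with rfl | hg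
        · exact hfm
        · exact h1 g hg
      · obtain ⟨W', a, b, c, d, e⟩ := aux_cut hV hW hVW f hf fun hc => by
          have := hlt W hW hVW hWX hc
          omega
        exact ⟨W', a, b, (hsub _).2 ⟨c.trans hWX, d⟩, by omega⟩
      · intro Y hY hVY hYX
        have := hlt Y hY hVY ((hsub _).1 hYX).1 ((hsub _).1 hYX).2
        omega

theorem delta_eq {V : Set (Fin n → ℂ)} (hV : IsIrredVariety n V) {i : ℕ} (h1 : 1 ≤ i)
    (hi : i ≤ n - dim n V) : partialDeg n V i = sInf {m | Good V m i} := by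
  rw [partialDeg, if_neg (by omega)]
  congr 1
  ext m
  exact good_iff hV hi

theorem good_delta {V : Set (Fin n → ℂ)} (hV : IsIrredVariety n V) {i : ℕ} (h1 : 1 ≤ i)
    (hi : i ≤ n - dim n V) : Good V (partialDeg n V i) i := by
  rw [delta_eq hV h1 hi]
  obtain ⟨m, hm⟩ := good_exists hV
  exact Nat.sInf_mem (s := {m | Good V m i}) ⟨m, good_anti hm hi⟩

theorem delta_le {V : Set (Fin n → ℂ)} (hV : IsIrredVariety n V) {i m : ℕ} (h1 : 1 ≤ i)
    (hi : i ≤ n - dim n V) (h : Good V m i) : partialDeg n V i ≤ m := by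
  rw [delta_eq hV h1 hi]
  exact Nat.sInf_le h

theorem delta_mono {V : Set (Fin n → ℂ)} (hV : IsIrredVariety n V) {i j : ℕ} (h1 : 1 ≤ i)
    (hij : i ≤ j) (hj : j ≤ n - dim n V) : partialDeg n V i ≤ partialDeg n V j :=
  delta_le hV h1 (by omega) (good_anti (good_delta hV (by omega) hj) hij)

theorem min_exists {V : Set (Fin n → ℂ)} (hV : IsIrredVariety n V) {s : ℕ}
    (hs : s ≤ n - dim n V) : ∃ V', IsMinimalVariety n V V' s := by
  have hn := aux_dim_le_n hV
  rcases hs.eq_or_lt with rfl | hs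
  · exact ⟨V, hV, Subset.rfl, by omega, fun f h h' => absurd h h'⟩
  · obtain ⟨W, hW, hVW, hdim, hd⟩ : ∃ W, IsIrredVariety n W ∧ V ⊆ W ∧ n - s ≤ dim n W ∧
        ∀ f ∈ vanishingIdeal n V, f ∉ vanishingIdeal n W →
          partialDeg n V (s + 1) ≤ f.totalDegree := by
      by_cases h0 : partialDeg n V (s + 1) = 0
      · exact ⟨univ, aux_univ.1, subset_univ _, by rw [aux_dim_univ]; omega,
          fun f _ _ => by omega⟩
      · have hng : ¬ Good V (partialDeg n V (s + 1) - 1) (s + 1) := fun h => by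
          have := delta_le hV (by omega) (by omega) h
          omega
        unfold Good at hng
        push Not at hng
        obtain ⟨W, a, b, c, d⟩ := hng
        refine ⟨W, a, b, by omega, fun f hf hf' => ?_⟩
        by_contra hlt
        exact hf' (c f hf (by omega))
    obtain ⟨W', a, b, c, d⟩ := aux_descend hV (n - s) (by omega) (dim n W - (n - s)) W hW hVW
      (by omega)
    refine ⟨W', a, b, d, fun f hf hf' => ?_⟩
    rw [partialDegE, if_pos (by omega)]
    exact_mod_cast hd f hf fun h => hf' (aux_vi_anti c h)

theorem zl_zero (P : ℕ → MvPolynomial (Fin n) ℂ) : zeroLocusUpTo n P 0 = univ := by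
  ext x
  simp only [mem_univ, iff_true]
  rintro f ⟨j, h1, h2, -⟩
  omega

theorem sub_zl (P : ℕ → MvPolynomial (Fin n) ℂ) (i : ℕ) (Y : Set (Fin n → ℂ)) :
    Y ⊆ zeroLocusUpTo n P i ↔ ∀ j, 1 ≤ j → j ≤ i → P j ∈ vanishingIdeal n Y := by
  constructor
  · intro h j h1 h2 x hx
    exact h hx _ ⟨j, h1, h2, rfl⟩
  · rintro h x hx f ⟨j, h1, h2, rfl⟩
    exact h j h1 h2 x hx

theorem sub_zl_succ (P : ℕ → MvPolynomial (Fin n) ℂ) (i : ℕ) (Y : Set (Fin n → ℂ)) :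
    Y ⊆ zeroLocusUpTo n P (i + 1) ↔ Y ⊆ zeroLocusUpTo n P i ∧ P (i + 1) ∈ vanishingIdeal n Y := by
  rw [sub_zl, sub_zl]
  constructor
  · exact fun h => ⟨fun j a b => h j a (by omega), h _ (by omega) le_rfl⟩
  · rintro ⟨h, h'⟩ j a b
    rcases b.eq_or_lt with rfl | b
    · exact h'
    · exact h j a (by omega)

theorem zl_congr {P Q : ℕ → MvPolynomial (Fin n) ℂ} {i : ℕ} (h : ∀ j, 1 ≤ j → j ≤ i → P j = Q j) :
    zeroLocusUpTo n P i = zeroLocusUpTo n Q i := by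
  apply Subset.antisymm
  · rw [sub_zl]
    intro j a b
    rw [← h j a b]
    exact (sub_zl P i _).1 Subset.rfl j a b
  · rw [sub_zl]
    intro j a b
    rw [h j a b]
    exact (sub_zl Q i _).1 Subset.rfl j a b

/-- Conclusions (i) and (ii) at index `j`. -/
def Cond (V : Set (Fin n → ℂ)) (P : ℕ → MvPolynomial (Fin n) ℂ) (j : ℕ) : Prop :=
  MaxCompDimEq n (zeroLocusUpTo n P j) V (n - j) ∧
    ∃ V', IsMinimalVariety n V V' j ∧ V' ⊆ zeroLocusUpTo n P j

theorem cond_zero {V : Set (Fin n → ℂ)} (hV : IsIrredVariety n V)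
    (P : ℕ → MvPolynomial (Fin n) ℂ) : Cond V P 0 := by
  rw [Cond, zl_zero]
  obtain ⟨V', h⟩ := min_exists hV (Nat.zero_le _)
  exact ⟨aux_max.2 ⟨⟨univ, aux_univ.1, subset_univ _, Subset.rfl, by simp [aux_dim_univ]⟩,
    fun W hW _ _ => by simpa using aux_dim_le_n hW⟩, V', h, subset_univ _⟩

theorem cond_congr {V : Set (Fin n → ℂ)} {P Q : ℕ → MvPolynomial (Fin n) ℂ} {i : ℕ}
    (h : ∀ j, 1 ≤ j → j ≤ i → P j = Q j) (hP : Cond V P i) : Cond V Q i := by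
  rw [Cond, ← zl_congr h]
  exact hP

theorem cond_step {V : Set (Fin n → ℂ)} (hV : IsIrredVariety n V)
    {P : ℕ → MvPolynomial (Fin n) ℂ} {i : ℕ} (hi : i + 1 ≤ n - dim n V) (hP : Cond V P i)
    (hdeg : ∀ j, 1 ≤ j → j ≤ i → (P j).totalDegree = partialDeg n V j) :
    ∃ f, Cond V (Function.update P (i + 1) f) (i + 1) ∧
      f.totalDegree = partialDeg n V (i + 1) := by
  have hn := aux_dim_le_n hV
  obtain ⟨hm, V', ⟨hV', hVV', hdV', hminV'⟩, hsub'⟩ := hP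
  obtain ⟨-, hmax⟩ := aux_max.1 hm
  have hVP : V ⊆ zeroLocusUpTo n P i := hVV'.trans hsub'
  obtain ⟨f, hf, hfm, hlt⟩ := aux_step ⟨_, rfl⟩ hmax
    (good_hm (good_delta hV (i := i + 1) (by omega) hi) (e := n - i) (by omega))
  have hfV' : f ∉ vanishingIdeal n V' := fun hc => by
    have := hlt V' hV' hVV' hsub' hc
    omega
  have hE : partialDegE n V (i + 1) = (partialDeg n V (i + 1) : ℕ∞) := by
    rw [partialDegE, if_pos hi]
  have hfd : f.totalDegree = partialDeg n V (i + 1) := by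
    refine le_antisymm hfm ?_
    have := hminV' f hf hfV'
    rw [hE] at this
    exact_mod_cast this
  have hsub : ∀ Y : Set (Fin n → ℂ), Y ⊆ zeroLocusUpTo n (Function.update P (i + 1) f) (i + 1) ↔
      Y ⊆ zeroLocusUpTo n P i ∧ f ∈ vanishingIdeal n Y := by
    intro Y
    rw [sub_zl_succ, Function.update_self, zl_congr (Q := P)]
    intro j _ _
    rw [Function.update_of_ne (by omega)]
  have hex : ∃ V'', IsMinimalVariety n V V'' (i + 1) ∧
      V'' ⊆ zeroLocusUpTo n (Function.update P (i + 1) f) (i + 1) := by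
    by_cases hc : (partialDeg n V (i + 1) : ℕ∞) < partialDegE n V (i + 1 + 1)
    · obtain ⟨V'', h⟩ := min_exists hV hi
      have hin : ∀ g ∈ vanishingIdeal n V, g.totalDegree ≤ partialDeg n V (i + 1) →
          g ∈ vanishingIdeal n V'' := by
        intro g hg hgd
        by_contra hg'
        have h1 := hc.trans_le (h.2.2.2 g hg hg')
        have h2 : partialDeg n V (i + 1) < g.totalDegree := by exact_mod_cast h1
        omega
      refine ⟨V'', h, (hsub _).2 ⟨(sub_zl _ _ _).2 fun j a b => ?_, hin f hf hfm⟩⟩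
      refine hin _ ((sub_zl _ _ _).1 hVP j a b) ?_
      rw [hdeg j a b]
      exact delta_mono hV a (by omega) hi
    · obtain ⟨W', a, b, c, d, e⟩ := aux_cut hV hV' hVV' f hf hfV'
      refine ⟨W', ⟨a, b, by omega, fun g hg hg' => ?_⟩, (hsub _).2 ⟨c.trans hsub', d⟩⟩
      refine (not_lt.1 hc).trans ?_
      rw [← hE]
      exact hminV' g hg fun h => hg' (aux_vi_anti c h)
  refine ⟨f, ⟨aux_max.2 ⟨?_, ?_⟩, hex⟩, hfd⟩
  · obtain ⟨V'', h, h'⟩ := hex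
    exact ⟨V'', h.1, h.2.1, h', h.2.2.1⟩
  · intro Y hY hVY hYX
    have := hlt Y hY hVY ((hsub _).1 hYX).1 ((hsub _).1 hYX).2
    omega

theorem main_exists {V : Set (Fin n → ℂ)} (hV : IsIrredVariety n V) (i : ℕ) :
    i ≤ n - dim n V → ∃ P : ℕ → MvPolynomial (Fin n) ℂ, ∀ j ≤ i, Cond V P j ∧
      (1 ≤ j → (P j).totalDegree = partialDeg n V j) := by
  induction i with
  | zero =>
    intro _
    refine ⟨fun _ => 0, fun j hj => ?_⟩
    obtain rfl : j = 0 := by omega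
    exact ⟨cond_zero hV _, by omega⟩
  | succ i ih =>
    intro hi
    obtain ⟨P, hP⟩ := ih (by omega)
    obtain ⟨f, hc, hd⟩ := cond_step hV hi (hP i le_rfl).1 fun j a b => (hP j b).2 a
    refine ⟨Function.update P (i + 1) f, fun j hj => ?_⟩
    rcases hj.eq_or_lt with rfl | hj
    · exact ⟨hc, fun _ => by rw [Function.update_self]; exact hd⟩
    · refine ⟨cond_congr (fun k _ _ => ?_) (hP j (by omega)).1, fun h => ?_⟩
      · rw [Function.update_of_ne (by omega)]
      · rw [Function.update_of_ne (by omega)]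
        exact (hP j (by omega)).2 h

theorem main_lower {V : Set (Fin n → ℂ)} (hV : IsIrredVariety n V)
    {Q : ℕ → MvPolynomial (Fin n) ℂ} {i : ℕ} (hi : i + 1 ≤ n - dim n V)
    (h0 : Cond V Q i) (h1 : Cond V Q (i + 1)) :
    partialDeg n V (i + 1) ≤ (Q (i + 1)).totalDegree := by
  have hn := aux_dim_le_n hV
  obtain ⟨-, V', ⟨a, b, c, d⟩, hs⟩ := h0
  obtain ⟨hm, V'', h2, hs2⟩ := h1
  have := d (Q (i + 1)) ((sub_zl_succ _ _ _).1 (h2.2.1.trans hs2)).2 fun hc => by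
    have := (aux_max.1 hm).2 V' a b ((sub_zl_succ _ _ _).2 ⟨hs, hc⟩)
    omega
  rw [partialDegE, if_pos hi] at this
  exact_mod_cast this

theorem lex_of_le {m : ℕ} {f g : ℕ → ℕ} (h : ∀ i, 1 ≤ i → i ≤ m → f i ≤ g i) : LexLE m f g := by
  classical
  by_cases hall : ∀ j ∈ Finset.Icc 1 m, f j = g j
  · exact Or.inl hall
  · push Not at hall
    have hex : ∃ j, j ∈ Finset.Icc 1 m ∧ f j ≠ g j := hall
    have hs := Nat.find_spec hex
    have hI := Finset.mem_Icc.1 hs.1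
    refine Or.inr ⟨Nat.find hex, hs.1, fun j h1 h2 => ?_,
      lt_of_le_of_ne (h _ hI.1 hI.2) hs.2⟩
    by_contra hne
    exact Nat.find_min hex h2 ⟨Finset.mem_Icc.2 ⟨h1, by omega⟩, hne⟩

end Combi

/-- Lemma 5.3 of the paper: existence of polynomials `P₁, …, P_{n-d}` with
`deg P_i = δ_i(V)`, such that the top-dimensional components of `Z(P₁, …, P_i)` containing `V`
have dimension `n - i`, `Z(P₁, …, P_i)` contains an `(n-i)`-minimal variety of `V`, and the
degree tuple is lexicographically least among all tuples satisfying these two conclusions. -/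
theorem statement15 (n : ℕ) (V : Set (Fin n → ℂ)) (d : ℕ)
    (hV : IsIrredVariety n V) (hd : dim n V = d) :
    ∃ P : ℕ → MvPolynomial (Fin n) ℂ,
      (∀ i ∈ Finset.Icc 1 (n - d),
        MaxCompDimEq n (zeroLocusUpTo n P i) V (n - i) ∧
        (∃ V', IsMinimalVariety n V V' i ∧ V' ⊆ zeroLocusUpTo n P i) ∧
        (P i).totalDegree = partialDeg n V i) ∧
      ∀ Q : ℕ → MvPolynomial (Fin n) ℂ,
        (∀ i ∈ Finset.Icc 1 (n - d),
          MaxCompDimEq n (zeroLocusUpTo n Q i) V (n - i) ∧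
          (∃ V', IsMinimalVariety n V V' i ∧ V' ⊆ zeroLocusUpTo n Q i)) →
        LexLE (n - d) (fun i => (P i).totalDegree) (fun i => (Q i).totalDegree) := by
  subst hd
  obtain ⟨P, hP⟩ := main_exists hV _ le_rfl
  refine ⟨P, fun i hi => ?_, fun Q hQ => lex_of_le fun i h1 h2 => ?_⟩
  · have hi := Finset.mem_Icc.1 hi
    exact ⟨(hP i hi.2).1.1, (hP i hi.2).1.2, (hP i hi.2).2 hi.1⟩
  · have hQ' : ∀ j ≤ n - dim n V, Cond V Q j := by
      intro j hj
      rcases Nat.eq_zero_or_pos j with rfl | hj0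
      · exact cond_zero hV Q
      · exact hQ j (Finset.mem_Icc.2 ⟨hj0, hj⟩)
    obtain ⟨k, rfl⟩ : ∃ k, i = k + 1 := ⟨i - 1, by omega⟩
    show (P (k + 1)).totalDegree ≤ (Q (k + 1)).totalDegree
    rw [(hP (k + 1) h2).2 h1]
    exact main_lower hV h2 (hQ' k (by omega)) (hQ' _ h2)

end Paper
end
end

section
/- Every irreducible variety V ⊆ ℂ^n of dimension d satisfies deg(V) ≤ ∏_{i=1}^{n−d} δ_i(V). -/
open MvPolynomial Set

noncomputable section

namespace Paper

variable (n : ℕ)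

-- height of maximal ideals
lemma height_max (s : ℕ) : ∀ (m : Ideal (MvPolynomial (Fin s) ℂ)), m.IsMaximal → m.height = s := by
  induction s with
  | zero =>
    intro m hm
    have h := Ideal.height_le_ringKrullDim_of_ne_top hm.ne_top
    rw [MvPolynomial.ringKrullDim_of_isNoetherianRing] at h
    simp at h
    simpa using h
  | succ s ih =>
    intro m hm
    let e := (finSuccEquiv ℂ s).toRingEquiv
    have : (m.map e).IsMaximal := Ideal.map_isMaximal_of_equiv e
    rw [← e.height_map m]
    have h2 : ((m.map e).under (MvPolynomial (Fin s) ℂ)).IsMaximal :=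
      Polynomial.isMaximal_comap_C_of_isJacobsonRing _
    have h3 : (m.map e).LiesOver ((m.map e).under (MvPolynomial (Fin s) ℂ)) := ⟨rfl⟩
    rw [Polynomial.height_eq_height_add_one ((m.map e).under (MvPolynomial (Fin s) ℂ)) (m.map e),
      ih _ h2]
    simp

lemma height_max_domain {A : Type*} [CommRing A] [IsDomain A] [Algebra ℂ A]
    [Algebra.FiniteType ℂ A] (m : Ideal A) [hm : m.IsMaximal] :
    (m.height : WithBot ℕ∞) = ringKrullDim A := by
  have : IsNoetherianRing A := Algebra.FiniteType.isNoetherianRing ℂ A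
  refine le_antisymm (Ideal.height_le_ringKrullDim_of_ne_top hm.ne_top) ?_
  obtain ⟨s, g, hg, hgi⟩ := exists_integral_inj_algHom_of_fg ℂ A
  algebraize [g.toRingHom]
  have : FaithfulSMul (MvPolynomial (Fin s) ℂ) A := 
    (faithfulSMul_iff_algebraMap_injective _ _).2 hg
  have hu : (m.under (MvPolynomial (Fin s) ℂ)).IsMaximal :=
    Ideal.isMaximal_comap_of_isIntegral_of_isMaximal m
  have h1 := Ideal.height_eq_height_add_of_liesOver_of_hasGoingDown
    (m.under (MvPolynomial (Fin s) ℂ)) m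
  rw [height_max s _ hu] at h1
  have h2 : ringKrullDim A ≤ ringKrullDim (MvPolynomial (Fin s) ℂ) := by
    refine Order.krullDim_le_of_strictMono
      (PrimeSpectrum.comap (algebraMap (MvPolynomial (Fin s) ℂ) A)) ?_
    intro p q hpq
    exact Ideal.IsIntegral.comap_lt_comap (I := p.asIdeal) (J := q.asIdeal) hpq
  refine h2.trans ?_
  rw [MvPolynomial.ringKrullDim_of_isNoetherianRing]
  have h3 : (s : ℕ∞) ≤ m.height := h1 ▸ le_self_add
  simpa using (WithBot.coe_le_coe.2 h3)

lemma dim_quot_minimal {A : Type*} [CommRing A] [IsDomain A] [Algebra ℂ A]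
    [Algebra.FiniteType ℂ A] (f : A) (q : Ideal A) (hq : q ∈ (Ideal.span {f}).minimalPrimes) :
    ringKrullDim A ≤ ringKrullDim (A ⧸ q) + 1 := by
  classical
  have : IsNoetherianRing A := Algebra.FiniteType.isNoetherianRing ℂ A
  have : IsJacobsonRing A := isJacobsonRing_of_finiteType (A := ℂ)
  have hqp : q.IsPrime := hq.1.1
  -- g
  have hfin : (Ideal.span {f}).minimalPrimes.Finite := Ideal.finite_minimalPrimes_of_isNoetherianRing A _
  obtain ⟨g, hgq, hg⟩ : ∃ g : A, g ∉ q ∧ ∀ r ∈ (Ideal.span {f}).minimalPrimes, r ≠ q → g ∈ r := by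
    have h : ∀ r ∈ (Ideal.span {f}).minimalPrimes, r ≠ q → ∃ x ∈ r, x ∉ q := by
      intro r hr hrq
      by_contra! hc
      exact hrq (le_antisymm hc (hq.2 hr.1 hc))
    choose! x hx hxq using h
    refine ⟨∏ r ∈ hfin.toFinset.erase q, x r, ?_, ?_⟩
    · intro hmem
      rw [hqp.prod_mem_iff] at hmem
      obtain ⟨r, hr, hr'⟩ := hmem
      simp only [Finset.mem_erase, Set.Finite.mem_toFinset] at hr
      exact hxq r hr.2 hr.1 hr'
    · intro r hr hrq
      exact Ideal.mem_of_dvd _ (Finset.dvd_prod_of_mem x (by simp [hrq, hr])) (hx r hr hrq)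
  obtain ⟨m, hm, hqm, hgm⟩ : ∃ m : Ideal A, m.IsMaximal ∧ q ≤ m ∧ g ∉ m := by
    have hj : q.jacobson = q := IsJacobsonRing.out ‹_› hqp.isRadical
    rw [← hj, Ideal.jacobson, Ideal.mem_sInf] at hgq
    push Not at hgq
    obtain ⟨m, hm, h⟩ := hgq
    exact ⟨m, hm.2, hm.1, h⟩
  rw [← height_max_domain m]
  let m' := m.map (Ideal.Quotient.mk q)
  have hm' : m'.IsPrime := Ideal.isPrime_map_quotientMk_of_isPrime hqm
  obtain ⟨s, hs, hcard⟩ := Ideal.exists_finset_card_eq_height_of_isNoetherianRing m'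
  choose lift hlift using Ideal.Quotient.mk_surjective (I := q)
  let t : Finset A := insert f (s.image lift)
  have ht : m ∈ (Ideal.span (t : Set A)).minimalPrimes := by
    have hmem : ∀ x, x ∈ m ↔ Ideal.Quotient.mk q x ∈ m' := fun x => by
      rw [Ideal.mem_quotient_iff_mem hqm]
    refine ⟨⟨hm.isPrime, ?_⟩, ?_⟩
    · rw [Ideal.span_le]
      intro x hx
      simp only [t, Finset.coe_insert, Finset.coe_image, Set.mem_insert_iff, Set.mem_image] at hx
      rcases hx with rfl | ⟨y, hy, rfl⟩
      · exact hqm (hq.1.2 (Ideal.subset_span rfl))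
      · rw [SetLike.mem_coe, hmem, hlift]
        exact hs.1.2 (Ideal.subset_span hy)
    · rintro r ⟨hr, htr⟩ hrm
      rw [Ideal.span_le] at htr
      have hf : Ideal.span {f} ≤ r := by
        rw [Ideal.span_le]; rintro _ rfl; exact htr (by simp [t])
      obtain ⟨r', hr', hr'r⟩ := Ideal.exists_minimalPrimes_le hf
      have hqr : q ≤ r := by
        by_cases h : r' = q
        · rwa [← h]
        · exact absurd (hrm (hr'r (hg r' hr' h))) hgm
      have h3 := hs.2 (y := r.map (Ideal.Quotient.mk q))
        ⟨Ideal.isPrime_map_quotientMk_of_isPrime hqr, by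
          rw [Ideal.span_le]
          intro y hy
          rw [SetLike.mem_coe, ← hlift y, Ideal.mem_quotient_iff_mem hqr]
          exact htr (by simp only [t, Finset.coe_insert, Finset.coe_image]; right; exact ⟨y, hy, rfl⟩)⟩ 
          (Ideal.map_mono hrm)
      intro x hx
      rw [hmem] at hx
      have := h3 hx
      rwa [Ideal.mem_quotient_iff_mem hqr] at this
  have h4 := Ideal.height_le_card_of_mem_minimalPrimes_span_finset ht
  have h5 : t.card ≤ s.card + 1 := (Finset.card_insert_le _ _).trans (by gcongr; exact Finset.card_image_le)
  have h6 : m'.height ≤ ringKrullDim (A ⧸ q) := Ideal.height_le_ringKrullDim_of_isPrime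
  rw [← hcard] at h6
  calc (m.height : WithBot ℕ∞) ≤ ((s.card + 1 : ℕ) : ℕ∞) := by
        exact_mod_cast h4.trans (by exact_mod_cast h5)
    _ = ((s.card : ℕ∞) : WithBot ℕ∞) + 1 := by push_cast; rfl
    _ ≤ _ := by gcongr


lemma vi_eq (n : ℕ) (V : Set (Fin n → ℂ)) : vanishingIdeal n V = MvPolynomial.vanishingIdeal ℂ V := by
  ext f
  rw [MvPolynomial.mem_vanishingIdeal_iff]
  simp only [MvPolynomial.aeval_eq_eval]
  exact Iff.rfl

lemma zl_eq (n : ℕ) (p : Ideal (MvPolynomial (Fin n) ℂ)) :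
    zeroLocus n (p : Set (MvPolynomial (Fin n) ℂ)) = MvPolynomial.zeroLocus ℂ p := by
  ext x
  rw [MvPolynomial.mem_zeroLocus_iff]
  simp only [MvPolynomial.aeval_eq_eval]
  exact Iff.rfl

lemma mem_vi {n : ℕ} {V : Set (Fin n → ℂ)} {f : MvPolynomial (Fin n) ℂ} :
    f ∈ vanishingIdeal n V ↔ ∀ x ∈ V, eval x f = 0 := Iff.rfl

lemma vi_zl (n : ℕ) (p : Ideal (MvPolynomial (Fin n) ℂ)) [p.IsPrime] :
    vanishingIdeal n (zeroLocus n (p : Set (MvPolynomial (Fin n) ℂ))) = p := by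
  rw [vi_eq, zl_eq]
  exact MvPolynomial.IsPrime.vanishingIdeal_zeroLocus p

lemma vi_anti {n : ℕ} {V W : Set (Fin n → ℂ)} (h : V ⊆ W) :
    vanishingIdeal n W ≤ vanishingIdeal n V := fun _ hf x hx => hf x (h hx)

lemma zl_anti {n : ℕ} {I J : Set (MvPolynomial (Fin n) ℂ)} (h : I ⊆ J) :
    zeroLocus n J ⊆ zeroLocus n I := fun _ hx f hf => hx f (h hf)

lemma zl_vi {n : ℕ} {V : Set (Fin n → ℂ)} (hV : IsAlgebraicSet n V) :
    zeroLocus n (vanishingIdeal n V : Set (MvPolynomial (Fin n) ℂ)) = V := by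
  obtain ⟨I, rfl⟩ := hV
  refine Subset.antisymm ?_ ?_
  · exact zl_anti (fun f hf x hx => hx f hf)
  · intro x hx f hf
    exact hf x hx

lemma irr_prime {n : ℕ} {V : Set (Fin n → ℂ)} (hV : IsIrredVariety n V) :
    (vanishingIdeal n V).IsPrime := by
  obtain ⟨_, ⟨x, hx⟩, h⟩ := hV
  refine ⟨?_, ?_⟩
  · rw [Ne, Ideal.eq_top_iff_one]
    intro h1
    simpa using h1 x hx
  · intro f g hfg
    have := h (zeroLocus n {f}) (zeroLocus n {g}) ⟨_, rfl⟩ ⟨_, rfl⟩ (by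
      intro y hy
      have := hfg y hy
      rw [map_mul, mul_eq_zero] at this
      rcases this with h | h
      · left; rintro _ rfl; exact h
      · right; rintro _ rfl; exact h)
    rcases this with h | h
    · left; intro y hy; exact h hy f rfl
    · right; intro y hy; exact h hy g rfl

lemma prime_irr {n : ℕ} (p : Ideal (MvPolynomial (Fin n) ℂ)) [hp : p.IsPrime] :
    IsIrredVariety n (zeroLocus n (p : Set (MvPolynomial (Fin n) ℂ))) := by
  refine ⟨⟨_, rfl⟩, ?_, ?_⟩
  · by_contra hne
    rw [Set.not_nonempty_iff_eq_empty] at hne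
    have h := vi_zl n p
    rw [hne] at h
    exact hp.ne_top (h ▸ (Ideal.eq_top_iff_one _).2 (fun x hx => hx.elim))
  · rintro _ _ ⟨I, rfl⟩ ⟨J, rfl⟩ h
    by_contra! hc
    obtain ⟨h1, h2⟩ := hc
    rw [Set.not_subset] at h1 h2
    obtain ⟨x, hx, hx'⟩ := h1
    obtain ⟨y, hy, hy'⟩ := h2
    simp only [zeroLocus, mem_setOf_eq, not_forall] at hx' hy'
    obtain ⟨f, hf, hfx⟩ := hx'
    obtain ⟨g, hg, hgy⟩ := hy'
    have hfg : f * g ∈ p := by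
      rw [← vi_zl n p]
      intro z hz
      rw [map_mul]
      rcases h hz with h | h
      · rw [h f hf, zero_mul]
      · rw [h g hg, mul_zero]
    rcases hp.mem_or_mem hfg with h | h
    · exact hfx (hx f h)
    · exact hgy (hy g h)

lemma hasChain_iff {n : ℕ} {V : Set (Fin n → ℂ)} (hV : IsIrredVariety n V) (k : ℕ) :
    HasChain n V k ↔ (k : WithBot ℕ∞) ≤ ringKrullDim (MvPolynomial (Fin n) ℂ ⧸ vanishingIdeal n V) := by
  rw [ringKrullDim_quotient, Order.le_krullDim_iff]
  constructor
  · rintro ⟨W, hW, hlt, hle⟩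
    refine ⟨⟨k, fun i => ⟨⟨vanishingIdeal n (W i.rev), irr_prime (hW _)⟩, ?_⟩, ?_⟩, rfl⟩
    · rw [PrimeSpectrum.mem_zeroLocus]
      refine vi_anti (Subset.trans ?_ hle)
      rcases eq_or_lt_of_le (Fin.le_last i.rev) with h | h
      · rw [h]
      · exact (hlt _ _ h).1
    · intro i
      have h := hlt (i.succ.rev) (i.castSucc.rev) (by rw [Fin.rev_lt_rev]; exact Fin.castSucc_lt_succ)
      refine lt_of_le_of_ne (vi_anti h.1) ?_
      intro he
      have he' : vanishingIdeal n (W i.castSucc.rev) = vanishingIdeal n (W i.succ.rev) := he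
      apply h.ne
      rw [← zl_vi (hW i.succ.rev).1, ← zl_vi (hW i.castSucc.rev).1, he']
  · rintro ⟨l, rfl⟩
    refine ⟨fun i => zeroLocus n ((l i.rev).1.asIdeal : Set (MvPolynomial (Fin n) ℂ)), 
      fun i => prime_irr _, ?_, ?_⟩
    · intro i j hij
      have h : l j.rev < l i.rev := l.strictMono (by rwa [Fin.rev_lt_rev])
      have h1 : (l j.rev).1.asIdeal ≤ (l i.rev).1.asIdeal := h.le
      refine ⟨zl_anti h1, fun hc => ?_⟩
      have h2 := vi_anti hc
      rw [vi_zl, vi_zl] at h2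
      exact absurd (show l i.rev ≤ l j.rev from h2) (not_le_of_gt h)
    · conv_rhs => rw [← zl_vi hV.1]
      exact zl_anti ((PrimeSpectrum.mem_zeroLocus _ _).1 (l (Fin.last l.length).rev).2)

lemma dimq_le (n : ℕ) (p : Ideal (MvPolynomial (Fin n) ℂ)) :
    ringKrullDim (MvPolynomial (Fin n) ℂ ⧸ p) ≤ n := by
  refine (ringKrullDim_quotient_le p).trans ?_
  rw [MvPolynomial.ringKrullDim_of_isNoetherianRing]
  simp

/-- natural number valued dimension of a prime -/
lemma exists_dimq (n : ℕ) (p : Ideal (MvPolynomial (Fin n) ℂ)) [p.IsPrime] :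
    ∃ k : ℕ, k ≤ n ∧ ringKrullDim (MvPolynomial (Fin n) ℂ ⧸ p) = k := by
  have h1 := dimq_le n p
  have h0 : 0 ≤ ringKrullDim (MvPolynomial (Fin n) ℂ ⧸ p) := ringKrullDim_nonneg_of_nontrivial
  generalize ringKrullDim (MvPolynomial (Fin n) ℂ ⧸ p) = D at *
  induction D with
  | bot => simp at h0
  | coe D =>
    have h1' : D ≤ (n : ℕ∞) := by exact_mod_cast h1
    lift D to ℕ using (ne_top_of_le_ne_top (ENat.coe_ne_top n) h1')
    exact ⟨D, by exact_mod_cast h1', rfl⟩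

lemma dim_eq {n : ℕ} {V : Set (Fin n → ℂ)} (hV : IsIrredVariety n V) :
    (dim n V : WithBot ℕ∞) = ringKrullDim (MvPolynomial (Fin n) ℂ ⧸ vanishingIdeal n V) := by
  have := irr_prime hV
  obtain ⟨k, hk, h⟩ := exists_dimq n (vanishingIdeal n V)
  rw [h, dim]
  have : {d | HasChain n V d} = Set.Iic k := by
    ext d
    rw [mem_setOf_eq, hasChain_iff hV, h]
    simp
  rw [this, csSup_Iic]

lemma dim_zl {n : ℕ} (p : Ideal (MvPolynomial (Fin n) ℂ)) [hp : p.IsPrime] :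
    (dim n (zeroLocus n (p : Set (MvPolynomial (Fin n) ℂ))) : WithBot ℕ∞) =
      ringKrullDim (MvPolynomial (Fin n) ℂ ⧸ p) := by
  rw [dim_eq (prime_irr p), vi_zl]

/-- dimension of a prime -/
def dp {n : ℕ} (p : Ideal (MvPolynomial (Fin n) ℂ)) : ℕ :=
  dim n (zeroLocus n (p : Set (MvPolynomial (Fin n) ℂ)))

lemma dp_anti {n : ℕ} {p q : Ideal (MvPolynomial (Fin n) ℂ)} [p.IsPrime] [q.IsPrime]
    (h : p ≤ q) : dp q ≤ dp p := by
  have : ringKrullDim (MvPolynomial (Fin n) ℂ ⧸ q) ≤ ringKrullDim (MvPolynomial (Fin n) ℂ ⧸ p) :=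
    ringKrullDim_le_of_surjective (Ideal.Quotient.factor h) (Ideal.Quotient.factor_surjective h)
  rw [← dim_zl, ← dim_zl] at this
  exact_mod_cast this

lemma dp_bot (n : ℕ) : dp (⊥ : Ideal (MvPolynomial (Fin n) ℂ)) = n := by
  have := dim_zl (⊥ : Ideal (MvPolynomial (Fin n) ℂ))
  rw [ringKrullDim_eq_of_ringEquiv (RingEquiv.quotientBot _),
    MvPolynomial.ringKrullDim_of_isNoetherianRing] at this
  simp at this
  exact_mod_cast this

lemma dp_le {n : ℕ} (p : Ideal (MvPolynomial (Fin n) ℂ)) [p.IsPrime] : dp p ≤ n := by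
  have := dimq_le n p
  rw [← dim_zl] at this
  exact_mod_cast this

lemma dp_lt {n : ℕ} {p q : Ideal (MvPolynomial (Fin n) ℂ)} [p.IsPrime] [q.IsPrime]
    (h : p < q) : dp q < dp p := by
  have hq : HasChain n (zeroLocus n (q : Set (MvPolynomial (Fin n) ℂ))) (dp q) := by
    rw [hasChain_iff (prime_irr q), vi_zl, ← dim_zl]; rfl
  obtain ⟨W, hW, hlt, hle⟩ := hq
  have hp : HasChain n (zeroLocus n (p : Set (MvPolynomial (Fin n) ℂ))) (dp q + 1) := by
    have hss : W (Fin.last _) ⊂ zeroLocus n (p : Set (MvPolynomial (Fin n) ℂ)) := by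
      refine ⟨hle.trans (zl_anti h.le), fun hc => ?_⟩
      have h2 := vi_anti (hc.trans hle)
      rw [vi_zl, vi_zl] at h2
      exact absurd h2 (not_le_of_gt h)
    refine ⟨Fin.snoc (α := fun _ => Set (Fin n → ℂ)) W
      (zeroLocus n (p : Set (MvPolynomial (Fin n) ℂ))), ?_, ?_, ?_⟩
    · intro i
      refine Fin.lastCases ?_ (fun i => ?_) i
      · rw [Fin.snoc_last]; exact prime_irr p
      · rw [Fin.snoc_castSucc]; exact hW i
    · intro i j
      refine Fin.lastCases ?_ (fun j => ?_) j
      · refine Fin.lastCases ?_ (fun i => ?_) i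
        · intro h; exact absurd h (lt_irrefl _)
        · intro _
          rw [Fin.snoc_castSucc, Fin.snoc_last]
          refine lt_of_le_of_lt ?_ hss
          rcases eq_or_lt_of_le (Fin.le_last i) with h | h
          · rw [h]
          · exact (hlt _ _ h).1
      · refine Fin.lastCases ?_ (fun i => ?_) i
        · intro h; exact absurd h (not_lt_of_ge (Fin.le_last _))
        · intro h
          rw [Fin.snoc_castSucc, Fin.snoc_castSucc]
          exact hlt _ _ (by simpa using h)
    · rw [Fin.snoc_last]
  rw [hasChain_iff (prime_irr p), vi_zl, ← dim_zl] at hp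
  have : dp q + 1 ≤ dp p := by exact_mod_cast hp
  omega

lemma dp_step {n : ℕ} {p q : Ideal (MvPolynomial (Fin n) ℂ)} [hp : p.IsPrime] 
    (f : MvPolynomial (Fin n) ℂ) (hq : q ∈ (p ⊔ Ideal.span {f}).minimalPrimes) :
    dp p ≤ dp q + 1 := by
  have hqp : q.IsPrime := hq.1.1
  have hpq : p ≤ q := le_sup_left.trans hq.1.2
  have hfq : f ∈ q := hq.1.2 (Ideal.mem_sup_right (Ideal.subset_span rfl))
  let q' := q.map (Ideal.Quotient.mk p)
  have hmem : ∀ x, Ideal.Quotient.mk p x ∈ q' ↔ x ∈ q := fun x => Ideal.mem_quotient_iff_mem hpq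
  have hq' : q' ∈ (Ideal.span {Ideal.Quotient.mk p f}).minimalPrimes := by
    refine ⟨⟨Ideal.isPrime_map_quotientMk_of_isPrime hpq, ?_⟩, ?_⟩
    · rw [Ideal.span_le]; rintro _ rfl; exact (hmem f).2 hfq
    · rintro r ⟨hr, hfr⟩ hrq x hx
      obtain ⟨x, rfl⟩ := Ideal.Quotient.mk_surjective x
      rw [hmem] at hx
      have h := hq.2 (y := r.comap (Ideal.Quotient.mk p)) ⟨Ideal.comap_isPrime _ _, by
        refine sup_le ?_ ?_
        · intro y hy
          rw [Ideal.mem_comap, Ideal.Quotient.eq_zero_iff_mem.2 hy]; exact zero_mem _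
        · rw [Ideal.span_le]; rintro _ rfl; exact hfr (Ideal.subset_span rfl)⟩ 
        (fun y hy => (hmem y).1 (hrq hy))
      exact h hx
  have h := dim_quot_minimal _ q' hq'
  rw [ringKrullDim_eq_of_ringEquiv (DoubleQuot.quotQuotEquivQuotOfLE hpq), ← dim_zl, ← dim_zl] at h
  exact_mod_cast h

lemma exists_prime_dp {n : ℕ} (k : ℕ) (hk : k ≤ n) (j : ℕ) : 
    ∀ (q : Ideal (MvPolynomial (Fin n) ℂ)) [q.IsPrime], dp q + j = k →
    ∃ p ≤ q, p.IsPrime ∧ dp p = k := by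
  induction j with
  | zero => intro q hq h; exact ⟨q, le_rfl, hq, h⟩
  | succ j ih =>
    intro q hq h
    have hqb : (⊥ : Ideal (MvPolynomial (Fin n) ℂ)) < q := by
      rw [bot_lt_iff_ne_bot]; rintro rfl; rw [dp_bot] at h; omega
    obtain ⟨p, ⟨hp, hpq⟩, hmax⟩ := set_has_maximal_iff_noetherian.2
      (inferInstance : IsNoetherianRing (MvPolynomial (Fin n) ℂ))
      {p : Ideal (MvPolynomial (Fin n) ℂ) | p.IsPrime ∧ p < q} ⟨⊥, Ideal.isPrime_bot, hqb⟩
    obtain ⟨f, hfq, hfp⟩ := Set.exists_of_ssubset hpq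
    have h1 : dp p ≤ dp q + 1 := by
      refine dp_step f ⟨⟨hq, sup_le hpq.le (by rw [Ideal.span_le]; rintro _ rfl; exact hfq)⟩, ?_⟩
      rintro r ⟨hr, hle⟩ hrq
      by_contra hc
      refine hmax r ⟨hr, lt_of_le_not_ge hrq hc⟩ (lt_of_le_not_ge (le_sup_left.trans hle) fun h => hfp ?_)
      exact h (hle (Ideal.mem_sup_right (Ideal.subset_span rfl)))
    have h2 := dp_lt hpq
    obtain ⟨p', hp', h3⟩ := ih p (by omega)
    exact ⟨p', hp'.trans hpq.le, h3⟩


instance rtd_fin (n m : ℕ) : Module.Finite ℂ (restrictTotalDegree (Fin n) ℂ m) := by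
  classical
  have hfin : {s : Fin n →₀ ℕ | s.degree ≤ m}.Finite := by
    exact Finsupp.finite_of_degree_le m
  have : Finite {s : Fin n →₀ ℕ | s.degree ≤ m} := hfin
  have : restrictTotalDegree (Fin n) ℂ m = restrictSupport ℂ {s : Fin n →₀ ℕ | s.degree ≤ m} := by
    rfl
  rw [this]
  exact Module.Finite.of_basis (basisRestrictSupport ℂ _)

/-- image of low degree polynomials in the quotient -/
def SS {n : ℕ} (p : Ideal (MvPolynomial (Fin n) ℂ)) (m : ℕ) :
    Submodule ℂ (MvPolynomial (Fin n) ℂ ⧸ p) :=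
  Submodule.map (Ideal.Quotient.mkₐ ℂ p).toLinearMap (restrictTotalDegree (Fin n) ℂ m)

instance SS_fin {n : ℕ} (p : Ideal (MvPolynomial (Fin n) ℂ)) (m : ℕ) :
    Module.Finite ℂ (SS p m) := by
  unfold SS; infer_instance

/-- Hilbert function of an ideal -/
def HF {n : ℕ} (p : Ideal (MvPolynomial (Fin n) ℂ)) (m : ℕ) : ℕ := Module.finrank ℂ (SS p m)

lemma rtd_mono {n m m' : ℕ} (h : m ≤ m') :
    restrictTotalDegree (Fin n) ℂ m ≤ restrictTotalDegree (Fin n) ℂ m' := by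
  intro f hf
  rw [mem_restrictTotalDegree] at *
  exact hf.trans h

lemma HF_mono {n : ℕ} (p : Ideal (MvPolynomial (Fin n) ℂ)) {m m' : ℕ} (h : m ≤ m') :
    HF p m ≤ HF p m' :=
  Submodule.finrank_mono (Submodule.map_mono (rtd_mono h))

lemma SS_map {n : ℕ} {p q : Ideal (MvPolynomial (Fin n) ℂ)} (h : p ≤ q) (m : ℕ) :
    (SS p m).map (Ideal.Quotient.factorₐ ℂ h).toLinearMap = SS q m := by
  unfold SS
  rw [← Submodule.map_comp]
  congr 1

lemma HF_anti {n : ℕ} {p q : Ideal (MvPolynomial (Fin n) ℂ)} (h : p ≤ q) (m : ℕ) :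
    HF q m ≤ HF p m := by
  unfold HF
  rw [← SS_map h]
  exact Submodule.finrank_map_le _ _

lemma HF_step {n : ℕ} {p q : Ideal (MvPolynomial (Fin n) ℂ)} [hp : p.IsPrime] (h : p ≤ q)
    {g : MvPolynomial (Fin n) ℂ} (hg : g ∈ q) (hgp : g ∉ p) {δ m : ℕ} (hδ : g.totalDegree ≤ δ) :
    HF p m + HF q (m + δ) ≤ HF p (m + δ) := by
  set π := (Ideal.Quotient.factorₐ ℂ h).toLinearMap
  have h1 := (π.domRestrict (SS p (m+δ))).finrank_range_add_finrank_ker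
  rw [LinearMap.range_domRestrict, SS_map] at h1
  have h2 : HF p m ≤ Module.finrank ℂ (LinearMap.ker (π.domRestrict (SS p (m+δ)))) := by
    rw [← Submodule.finrank_map_subtype_eq (SS p (m+δ))]
    have hinj : Function.Injective (LinearMap.mulLeft ℂ (Ideal.Quotient.mk p g)) := by
      intro a b hab
      refine mul_left_cancel₀ (a := Ideal.Quotient.mk p g) ?_ hab
      rwa [Ne, Ideal.Quotient.eq_zero_iff_mem]
    have h3 : HF p m = Module.finrank ℂ ((SS p m).map (LinearMap.mulLeft ℂ (Ideal.Quotient.mk p g))) := 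
      (LinearEquiv.finrank_eq (Submodule.equivMapOfInjective _ hinj (SS p m)))
    rw [h3]
    apply Submodule.finrank_mono
    rintro _ ⟨_, ⟨f, hf, rfl⟩, rfl⟩
    have hf' : f.totalDegree ≤ m := (mem_restrictTotalDegree _ _ _).1 hf
    refine ⟨⟨Ideal.Quotient.mk p (g * f), ⟨g * f, ?_, rfl⟩⟩, ?_, ?_⟩
    · refine (mem_restrictTotalDegree _ _ _).2 ((totalDegree_mul _ _).trans ?_)
      omega
    · simp only [SetLike.mem_coe, LinearMap.mem_ker]
      show Ideal.Quotient.mk q (g * f) = 0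
      rw [Ideal.Quotient.eq_zero_iff_mem]
      exact q.mul_mem_right _ hg
    · simp
  unfold HF at *
  omega

lemma HF_sum {n : ℕ} {p q : Ideal (MvPolynomial (Fin n) ℂ)} [hp : p.IsPrime] (h : p ≤ q)
    {g : MvPolynomial (Fin n) ℂ} (hg : g ∈ q) (hgp : g ∉ p) (hq : q ≠ ⊤)
    {δ : ℕ} (hδ : g.totalDegree ≤ δ) (m : ℕ) :
    ∑ k ∈ Finset.range (m + 1), HF q k ≤ δ * HF p m := by
  have hδ0 : 0 < δ := by
    rcases Nat.eq_zero_or_pos δ with h0 | h0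
    · subst h0
      exfalso
      have := totalDegree_eq_zero_iff_eq_C.1 (Nat.le_zero.1 hδ)
      have hc : g.coeff 0 ≠ 0 := by
        intro hc; rw [hc, map_zero] at this; rw [this] at hgp; exact hgp p.zero_mem
      apply hq
      refine Ideal.eq_top_of_isUnit_mem _ (this ▸ hg) ?_
      exact (isUnit_iff_ne_zero.2 hc).map C
    · exact h0
  induction m using Nat.strong_induction_on with
  | _ m ih =>
    rcases lt_or_ge m δ with hm | hm
    · calc ∑ k ∈ Finset.range (m + 1), HF q k ≤ ∑ k ∈ Finset.range (m + 1), HF p m :=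
            Finset.sum_le_sum fun k hk => (HF_anti h k).trans
              (HF_mono p (by have := Finset.mem_range.1 hk; omega))
        _ = (m+1) * HF p m := by simp
        _ ≤ _ := Nat.mul_le_mul_right _ hm
    · obtain ⟨r, rfl⟩ := Nat.exists_eq_add_of_le' hm
      have h1 := ih r (by omega)
      have h2 := HF_step h hg hgp hδ (m := r)
      have h3 : r + δ + 1 = (r + 1) + δ := by omega
      rw [h3, Finset.sum_range_add]
      have h4 : ∑ x ∈ Finset.range δ, HF q (r + 1 + x) ≤ δ * HF q (r + δ) := by
        calc _ ≤ ∑ x ∈ Finset.range δ, HF q (r + δ) := Finset.sum_le_sum fun k hk => 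
              (HF_mono q (by have := Finset.mem_range.1 hk; omega))
          _ = _ := by simp
      calc _ ≤ δ * HF p r + δ * HF q (r+δ) := add_le_add h1 h4
        _ = δ * (HF p r + HF q (r+δ)) := by ring
        _ ≤ _ := Nat.mul_le_mul_left _ h2


lemma finrank_rtd (n m : ℕ) :
    Module.finrank ℂ (restrictTotalDegree (Fin n) ℂ m) = (m + n).choose n := by
  classical
  have hfin : {s : Fin n →₀ ℕ | s.degree ≤ m}.Finite := Finsupp.finite_of_degree_le m
  have : Fintype {s : Fin n →₀ ℕ | s.degree ≤ m} := hfin.fintype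
  have h1 : restrictTotalDegree (Fin n) ℂ m = restrictSupport ℂ {s : Fin n →₀ ℕ | s.degree ≤ m} := rfl
  rw [h1, Module.finrank_eq_card_basis (basisRestrictSupport ℂ _)]
  have h2 : {s : Fin n →₀ ℕ | s.degree ≤ m} = 
      (((Finset.range (m+1)).biUnion fun k => (Finset.univ : Finset (Fin n)).finsuppAntidiag k : 
        Finset (Fin n →₀ ℕ)) : Set (Fin n →₀ ℕ)) := by
    ext s
    simp [Finsupp.degree_eq_sum]
  rw [← Set.toFinset_card, Set.toFinset_congr h2, Finset.toFinset_coe, Finset.card_biUnion]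
  · simp only [Finset.card_finsuppAntidiag_nat_eq_multichoose, Finset.card_univ, Fintype.card_fin]
    rw [Nat.sum_range_multichoose]

  · intro i _ j _ hij
    rw [Function.onFun, Finset.disjoint_left]
    intro s hs hs'
    simp at hs hs'
    exact hij (hs.symm.trans hs')

lemma HF_le {n : ℕ} (p : Ideal (MvPolynomial (Fin n) ℂ)) (m : ℕ) : HF p m ≤ (m + n).choose n := by
  rw [← finrank_rtd]
  exact Submodule.finrank_map_le _ _

lemma hockey (e m : ℕ) : ∑ k ∈ Finset.range (m + 1), (k + e).choose e = (m + (e + 1)).choose (e + 1) := by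
  rw [Nat.sum_range_add_choose]; ring_nf

lemma asymp (N D n c : ℕ) (h : ∀ m : ℕ, N * (m + n).choose n ≤ D * (m + c + n).choose n) : N ≤ D := by
  have h1 : ∀ m : ℕ, (N : ℝ) ≤ D * (1 + ((c + n : ℕ) : ℝ) * (1 / ((m : ℝ) + 1))) ^ n := by
    intro m
    have hm := h m
    have h2 : ((m + n + 1 - n : ℕ) ^ n : ℝ) / n.factorial ≤ (m + n).choose n := Nat.pow_le_choose n (m + n)
    have h3 : ((m + c + n).choose n : ℝ) ≤ ((m + c + n : ℕ) : ℝ) ^ n / n.factorial :=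
      Nat.choose_le_pow_div n (m + c + n)
    have h4 : (N : ℝ) * (m + n).choose n ≤ D * (m + c + n).choose n := by exact_mod_cast hm
    have h5 : (N : ℝ) * (((m + n + 1 - n : ℕ) ^ n : ℝ) / n.factorial) ≤
        D * (((m + c + n : ℕ) : ℝ) ^ n / n.factorial) :=
      (mul_le_mul_of_nonneg_left h2 (Nat.cast_nonneg _)).trans
        (h4.trans (mul_le_mul_of_nonneg_left h3 (Nat.cast_nonneg _)))
    rw [show m + n + 1 - n = m + 1 by omega, ← mul_div_assoc, ← mul_div_assoc,
      div_le_div_iff_of_pos_right (by positivity)] at h5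
    have h6 : (1 + ((c + n : ℕ) : ℝ) * (1 / ((m : ℝ) + 1))) = (m + 1 + c + n) / (m + 1) := by
      push_cast; field_simp; ring
    rw [h6, div_pow, ← mul_div_assoc, le_div_iff₀ (by positivity)]
    push_cast at h5
    refine h5.trans ?_
    gcongr
    linarith
  have h2 : Filter.Tendsto (fun m : ℕ => (D : ℝ) * (1 + ((c + n : ℕ) : ℝ) * (1 / ((m : ℝ) + 1))) ^ n)
      Filter.atTop (nhds ((D : ℝ) * (1 + ((c + n : ℕ) : ℝ) * 0) ^ n)) :=
    ((((tendsto_one_div_add_atTop_nhds_zero_nat).const_mul _).const_add _).pow n).const_mul _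
  have h3 := ge_of_tendsto' h2 h1
  simp at h3
  exact h3


lemma exists_trailing {ι : Type*} (Y : Finset ι) (G : ι → Polynomial ℂ) (y0 : ι) (h0 : y0 ∈ Y)
    (hG : G y0 ≠ 0) : ∃ (s : ℕ) (Q : ι → Polynomial ℂ), (∀ y ∈ Y, G y = Polynomial.X ^ s * Q y) ∧
      ∃ y1 ∈ Y, (Q y1).eval 0 ≠ 0 := by
  classical
  obtain ⟨y1, hy1, hmin⟩ := Finset.exists_min_image (Y.filter fun y => G y ≠ 0)
    (fun y => (G y).natTrailingDegree) ⟨y0, by simp [h0, hG]⟩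
  rw [Finset.mem_filter] at hy1
  have hdvd : ∀ y ∈ Y, Polynomial.X ^ (G y1).natTrailingDegree ∣ G y := by
    intro y hy
    by_cases hz : G y = 0
    · rw [hz]; exact dvd_zero _
    · rw [Polynomial.X_pow_dvd_iff]
      intro k hk
      exact Polynomial.coeff_eq_zero_of_lt_natTrailingDegree
        (hk.trans_le (hmin y (by simp [hy, hz])))
  choose! Q hQ using hdvd
  refine ⟨_, Q, hQ, y1, hy1.1, ?_⟩
  rw [← Polynomial.coeff_zero_eq_eval_zero]
  have h1 : (G y1).coeff (G y1).natTrailingDegree ≠ 0 := by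
    rw [← Polynomial.trailingCoeff]
    exact Polynomial.trailingCoeff_nonzero_iff_nonzero.2 hy1.2
  intro hc
  apply h1
  have := Polynomial.coeff_X_pow_mul (Q y1) (G y1).natTrailingDegree 0
  rw [zero_add, ← hQ y1 hy1.1] at this
  rw [this, hc]

lemma key_inj {n d : ℕ} (p : Ideal (MvPolynomial (Fin n) ℂ)) [hp : p.IsPrime] (hd : dp p = d)
    (l : Fin d → MvPolynomial (Fin n) ℂ) (Y : Finset (Fin n → ℂ))
    (hY : ∀ x, x ∈ Y ↔ x ∈ zeroLocus n (p : Set (MvPolynomial (Fin n) ℂ)) ∧ ∀ j, eval x (l j) = 0)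
    (e : (Fin n → ℂ) → MvPolynomial (Fin n) ℂ)
    (he1 : ∀ y ∈ Y, eval y (e y) = 1) (he0 : ∀ y ∈ Y, ∀ y' ∈ Y, y ≠ y' → eval y' (e y) = 0)
    (P : (Fin n → ℂ) → MvPolynomial (Fin d) ℂ)
    (hP : ∑ y ∈ Y, aeval l (P y) * e y ∈ p) : ∀ y ∈ Y, P y = 0 := by
  classical
  intro y0 hy0
  by_contra hne
  obtain ⟨v, hv⟩ : ∃ v, eval v (P y0) ≠ 0 := by
    by_contra! hc
    exact hne (MvPolynomial.funext fun x => by rw [hc x, map_zero])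
  have evalY : ∀ y ∈ Y, ∀ F : (Fin n → ℂ) → MvPolynomial (Fin n) ℂ,
      eval y (∑ y ∈ Y, F y * e y) = eval y (F y) := by
    intro y hy F
    rw [map_sum, Finset.sum_eq_single y]
    · rw [map_mul, he1 y hy, mul_one]
    · intro b hb hby
      rw [map_mul, he0 b hb y hy hby, mul_zero]
    · intro h; exact absurd hy h
  have hpY : ∀ y ∈ Y, ∀ f ∈ p, eval y f = 0 := fun y hy f hf => ((hY y).1 hy).1 f hf
  by_cases hv0 : v = 0
  · have h1 := hpY y0 hy0 _ hP
    rw [evalY y0 hy0 (fun y => aeval l (P y))] at h1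
    apply hv
    rw [hv0, ← h1]
    have : (eval y0) (aeval l (P y0)) = eval (fun j => eval y0 (l j)) (P y0) := by
      rw [← MvPolynomial.aeval_eq_eval, ← AlgHom.coe_toRingHom]
      simp only [AlgHom.coe_toRingHom]
      rw [← AlgHom.comp_apply, MvPolynomial.comp_aeval]
      simp only [MvPolynomial.aeval_eq_eval]
    rw [this]
    congr 1
    congr 1
    funext j
    exact (((hY y0).1 hy0).2 j).symm
  obtain ⟨k, hk⟩ : ∃ k, v k ≠ 0 := by
    by_contra! hc; exact hv0 (funext hc)
  obtain ⟨s, Q, hQ, y1, hy1, hQ1⟩ := exists_trailing Y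
    (fun y => aeval (fun j => Polynomial.C (v j) * Polynomial.X) (P y)) y0 hy0 (by
      intro h
      apply hv
      have h2 := congrArg (Polynomial.aeval (1 : ℂ)) h
      simp only [map_zero] at h2
      rw [← h2, ← AlgHom.comp_apply, MvPolynomial.comp_aeval]
      simp [MvPolynomial.aeval_eq_eval])
  set t : MvPolynomial (Fin n) ℂ := C (v k)⁻¹ * l k with ht
  -- the maximal ideal
  let ev : (MvPolynomial (Fin n) ℂ ⧸ p) →+* ℂ := Ideal.Quotient.lift p (eval y1) (hpY y1 hy1)
  have hev : ∀ f, ev (Ideal.Quotient.mk p f) = eval y1 f := fun f => by simp [ev]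
  have hsurj : Function.Surjective ev := fun c => ⟨Ideal.Quotient.mk p (C c), by rw [hev, eval_C]⟩
  have hM : (RingHom.ker ev).IsMaximal := RingHom.ker_isMaximal_of_surjective ev hsurj
  let S : Finset (MvPolynomial (Fin n) ℂ ⧸ p) :=
    (Finset.univ.erase k).image fun j => Ideal.Quotient.mk p (C (v k) * l j - C (v j) * l k)
  have hmin : RingHom.ker ev ∈ (Ideal.span (S : Set (MvPolynomial (Fin n) ℂ ⧸ p))).minimalPrimes := by
    refine ⟨⟨hM.isPrime, ?_⟩, ?_⟩
    · rw [Ideal.span_le]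
      intro z hz
      simp only [S, Finset.coe_image, Set.mem_image] at hz
      obtain ⟨j, -, rfl⟩ := hz
      rw [SetLike.mem_coe, RingHom.mem_ker, hev]
      simp [((hY y1).1 hy1).2]
    · rintro r ⟨hr, hSr⟩ hrM
      let q := r.comap (Ideal.Quotient.mk p)
      have hqp : q.IsPrime := Ideal.comap_isPrime _ _
      have hqm : ∀ f ∈ q, eval y1 f = 0 := fun f hf => by
        rw [← hev]; exact hrM hf
      have hpq : p ≤ q := by
        intro f hf
        show Ideal.Quotient.mk p f ∈ r
        rw [Ideal.Quotient.eq_zero_iff_mem.2 hf]; exact r.zero_mem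
      let φ := Ideal.Quotient.mkₐ ℂ q
      have hφ0 : ∀ f, φ f = 0 ↔ f ∈ q := fun f => Ideal.Quotient.eq_zero_iff_mem
      have hl : ∀ j, φ (l j) = φ (C (v j) * t) := by
        intro j
        rw [← sub_eq_zero, ← map_sub, hφ0]
        have hC : (C (v k)⁻¹ * C (v k) : MvPolynomial (Fin n) ℂ) = 1 := by
          rw [← C_mul, inv_mul_cancel₀ hk, C_1]
        have : l j - C (v j) * t = C (v k)⁻¹ * (C (v k) * l j - C (v j) * l k) := by
          rw [ht]; linear_combination (-(l j)) * hC
        rw [this]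
        apply q.mul_mem_left
        by_cases hjk : j = k
        · subst hjk; rw [sub_self]; exact q.zero_mem
        · apply hSr
          apply Ideal.subset_span
          simp only [S, Finset.coe_image, Set.mem_image]
          exact ⟨j, by simp [hjk], rfl⟩
      have hG : ∀ y ∈ Y, φ (aeval l (P y)) = φ (t ^ s * Polynomial.aeval t (Q y)) := by
        intro y hy
        have h1 : t ^ s * Polynomial.aeval t (Q y) = Polynomial.aeval t (Polynomial.X ^ s * Q y) := by
          simp
        rw [h1, ← hQ y hy]
        have h2 : φ.comp (aeval l) = φ.comp ((Polynomial.aeval t).comp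
            (aeval (fun j => Polynomial.C (v j) * Polynomial.X))) := by
          apply MvPolynomial.algHom_ext
          intro j
          simp only [AlgHom.comp_apply, aeval_X, hl, map_mul, Polynomial.aeval_X, Polynomial.aeval_C]
          rfl
        exact congrArg (fun ψ => ψ (P y)) h2
      have hu : φ t ^ s * φ (∑ y ∈ Y, Polynomial.aeval t (Q y) * e y) = 0 := by
        have h1 := (hφ0 _).2 (hpq hP)
        rw [map_sum] at h1
        rw [map_sum, Finset.mul_sum, ← h1]
        refine Finset.sum_congr rfl fun y hy => ?_
        rw [map_mul φ (aeval l (P y)), hG y hy]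
        simp only [map_mul, map_pow]
        ring
      have hun : φ (∑ y ∈ Y, Polynomial.aeval t (Q y) * e y) ≠ 0 := by
        intro hc
        have h1 := hqm _ ((hφ0 _).1 hc)
        rw [evalY y1 hy1 (fun y => Polynomial.aeval t (Q y))] at h1
        apply hQ1
        have ht0 : eval y1 t = 0 := by simp [ht, ((hY y1).1 hy1).2 k]
        have h2 : (aeval y1) (Polynomial.aeval t (Q y1)) = Polynomial.aeval (aeval y1 t) (Q y1) :=
          (Polynomial.aeval_algHom_apply _ _ _).symm
        simp only [MvPolynomial.aeval_eq_eval] at h2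
        rw [h1, ht0] at h2
        rw [Polynomial.coe_aeval_eq_eval] at h2; exact h2.symm
      have hqd : IsDomain (MvPolynomial (Fin n) ℂ ⧸ q) := inferInstance
      have ht0 : φ t = 0 := by
        have := (mul_eq_zero.1 hu).resolve_right hun
        exact eq_zero_of_pow_eq_zero this
      have hlq : ∀ j, l j ∈ q := by
        intro j
        rw [← hφ0, hl, map_mul, ht0, mul_zero]
      have hZ : ∀ x ∈ zeroLocus n (q : Set (MvPolynomial (Fin n) ℂ)), x ∈ Y := by
        intro x hx
        rw [hY]
        exact ⟨zl_anti (show (p : Set (MvPolynomial (Fin n) ℂ)) ⊆ q from hpq) hx, fun j => hx _ (hlq j)⟩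
      intro f hf
      obtain ⟨f, rfl⟩ := Ideal.Quotient.mk_surjective f
      rw [RingHom.mem_ker, hev] at hf
      show f ∈ q
      have hmem : f * e y1 ∈ q := by
        rw [← vi_zl n q]
        intro x hx
        rw [map_mul]
        by_cases hxy : x = y1
        · rw [hxy, hf, zero_mul]
        · rw [he0 y1 hy1 x (hZ x hx) (Ne.symm hxy), mul_zero]
      refine (hqp.mem_or_mem hmem).resolve_right fun h => ?_
      have := hqm _ h
      rw [he1 y1 hy1] at this
      exact one_ne_zero this
  have h1 := Ideal.height_le_card_of_mem_minimalPrimes_span_finset hmin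
  have h2 := height_max_domain (RingHom.ker ev)
  have h3 := dim_zl p
  rw [← h2] at h3
  have hc : S.card < d := by
    have h4 : S.card ≤ (Finset.univ.erase k).card := Finset.card_image_le
    rw [Finset.card_erase_of_mem (Finset.mem_univ k), Finset.card_univ, Fintype.card_fin] at h4
    have := k.pos
    omega
  have h5 : ((dp p : ℕ) : WithBot ℕ∞) = ((RingHom.ker ev).height : WithBot ℕ∞) := h3
  rw [hd] at h5
  have h6 : ((d : ℕ∞)) = (RingHom.ker ev).height := by exact_mod_cast h5
  rw [← h6] at h1
  have h7 : d ≤ S.card := by exact_mod_cast h1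
  omega


lemma exists_interp {n : ℕ} (Y : Finset (Fin n → ℂ)) :
    ∃ e : (Fin n → ℂ) → MvPolynomial (Fin n) ℂ, (∀ y ∈ Y, eval y (e y) = 1) ∧
      (∀ y ∈ Y, ∀ y' ∈ Y, y ≠ y' → eval y' (e y) = 0) := by
  classical
  have h : ∀ y y' : Fin n → ℂ, ∃ f : MvPolynomial (Fin n) ℂ, y ≠ y' → eval y f = 1 ∧ eval y' f = 0 := by
    intro y y'
    by_cases hy : y = y'
    · exact ⟨0, fun h => absurd hy h⟩
    · obtain ⟨i, hi⟩ := Function.ne_iff.1 hy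
      refine ⟨C (y i - y' i)⁻¹ * (X i - C (y' i)), fun _ => ⟨?_, ?_⟩⟩
      · simp [inv_mul_cancel₀ (sub_ne_zero.2 hi)]
      · simp
  choose f hf using h
  refine ⟨fun y => ∏ y' ∈ Y.erase y, f y y', ?_, ?_⟩
  · intro y hy
    rw [map_prod]
    exact Finset.prod_eq_one fun y' hy' => (hf y y' (Finset.ne_of_mem_erase hy').symm).1
  · intro y hy y' hy' hne
    rw [map_prod]
    exact Finset.prod_eq_zero (Finset.mem_erase.2 ⟨hne.symm, hy'⟩) (hf y y' hne).2

lemma exists_forms {n d : ℕ} (hd : d ≤ n) (L : AffineSubspace ℂ (Fin n → ℂ)) (x0 : Fin n → ℂ)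
    (hx0 : x0 ∈ L) (hL : Module.finrank ℂ L.direction = n - d) :
    ∃ l : Fin d → MvPolynomial (Fin n) ℂ, (∀ j, (l j).totalDegree ≤ 1) ∧
      ∀ x, x ∈ L ↔ ∀ j, eval x (l j) = 0 := by
  have h1 : Module.finrank ℂ ((Fin n → ℂ) ⧸ L.direction) = d := by
    have := Submodule.finrank_quotient_add_finrank L.direction
    rw [hL, Module.finrank_fin_fun] at this
    omega
  let b := Module.finBasisOfFinrankEq ℂ ((Fin n → ℂ) ⧸ L.direction) h1
  let φ : Fin d → (Fin n → ℂ) →ₗ[ℂ] ℂ := fun j => (b.coord j).comp L.direction.mkQ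
  refine ⟨fun j => ∑ i, C (φ j (Pi.single i 1)) * (X i - C (x0 i)), ?_, ?_⟩
  · intro j
    refine totalDegree_finsetSum_le fun i _ => ?_
    refine (totalDegree_mul _ _).trans ?_
    rw [totalDegree_C, zero_add]
    refine (totalDegree_sub _ _).trans ?_
    simp
  · intro x
    have h2 : ∀ j, eval x (∑ i, C (φ j (Pi.single i 1)) * (X i - C (x0 i))) = φ j (x - x0) := by
      intro j
      conv_rhs => rw [LinearMap.pi_apply_eq_sum_univ (φ j) (x - x0)]
      rw [map_sum]
      refine Finset.sum_congr rfl fun i _ => ?_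
      have h3 : (Pi.single i 1 : Fin n → ℂ) = fun j => if i = j then 1 else 0 := by
        funext j; simp [Pi.single_apply, eq_comm]
      rw [h3]
      simp [mul_comm]
    simp only [h2]
    rw [← AffineSubspace.vsub_right_mem_direction_iff_mem hx0, ← Submodule.Quotient.mk_eq_zero]
    rw [← b.repr.map_eq_zero_iff, Finsupp.ext_iff]
    rfl

lemma totalDegree_aeval_le {n d : ℕ} (l : Fin d → MvPolynomial (Fin n) ℂ)
    (hl : ∀ j, (l j).totalDegree ≤ 1) (P : MvPolynomial (Fin d) ℂ) :
    (aeval l P).totalDegree ≤ P.totalDegree := by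
  rw [aeval_def, eval₂_eq]
  refine totalDegree_finsetSum_le fun s hs => (totalDegree_mul _ _).trans ?_
  rw [algebraMap_eq, totalDegree_C, zero_add]
  refine le_trans ?_ (le_totalDegree hs)
  refine (totalDegree_finsetProd _ _).trans (Finset.sum_le_sum fun i _ => ?_)
  refine (totalDegree_pow _ _).trans ?_
  exact (Nat.mul_le_mul_left _ (hl i)).trans (by simp)

lemma lower_bound {n d : ℕ} (p : Ideal (MvPolynomial (Fin n) ℂ)) [hp : p.IsPrime] (hd : dp p = d)
    (L : AffineSubspace ℂ (Fin n → ℂ)) (hL : Module.finrank ℂ L.direction = n - d)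
    (hfin : (zeroLocus n (p : Set (MvPolynomial (Fin n) ℂ)) ∩ ↑L).Finite) :
    ∃ c, ∀ m, (zeroLocus n (p : Set (MvPolynomial (Fin n) ℂ)) ∩ ↑L).ncard * (m + d).choose d 
      ≤ HF p (m + c) := by
  classical
  rcases (zeroLocus n (p : Set (MvPolynomial (Fin n) ℂ)) ∩ ↑L).eq_empty_or_nonempty with he | ⟨x0, hx0⟩
  · refine ⟨0, fun m => ?_⟩
    rw [he]; simp
  obtain ⟨l, hl1, hl⟩ := exists_forms (hd ▸ dp_le p) L x0 hx0.2 hL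
  set Y := hfin.toFinset with hY
  obtain ⟨e, he1, he0⟩ := exists_interp Y
  refine ⟨Y.sup fun y => (e y).totalDegree, fun m => ?_⟩
  set c := Y.sup fun y => (e y).totalDegree
  rw [Set.ncard_eq_toFinset_card _ hfin, ← hY, ← finrank_rtd, ]
  let T : (Y → restrictTotalDegree (Fin d) ℂ m) →ₗ[ℂ] (MvPolynomial (Fin n) ℂ ⧸ p) :=
    (Ideal.Quotient.mkₐ ℂ p).toLinearMap.comp 
      (∑ y : Y, (LinearMap.mulRight ℂ (e y)).comp ((aeval l).toLinearMap.comp 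
        ((Submodule.subtype _).comp (LinearMap.proj y))))
  have hT : ∀ P, T P = Ideal.Quotient.mk p (∑ y : Y, aeval l (P y : MvPolynomial (Fin d) ℂ) * e y) := by
    intro P
    simp [T]
  have hinj : Function.Injective T := by
    rw [injective_iff_map_eq_zero]
    intro P hP
    rw [hT, Ideal.Quotient.eq_zero_iff_mem] at hP
    have h := key_inj p hd l Y (fun x => by simp [hY, hl]) e he1 he0
      (fun y => if h : y ∈ Y then (P ⟨y, h⟩ : MvPolynomial (Fin d) ℂ) else 0) (by
        rw [← Finset.sum_coe_sort]
        convert hP using 3 with y hy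
        simp)
    funext y
    have := h y y.2
    simpa using this
  have hrange : LinearMap.range T ≤ SS p (m + c) := by
    rintro _ ⟨P, rfl⟩
    rw [hT]
    refine ⟨_, ?_, rfl⟩
    rw [SetLike.mem_coe, mem_restrictTotalDegree]
    refine totalDegree_finsetSum_le fun y _ => (totalDegree_mul _ _).trans (add_le_add ?_ ?_)
    · exact (totalDegree_aeval_le l hl1 _).trans ((mem_restrictTotalDegree _ _ _).1 (P y).2)
    · exact Finset.le_sup (f := fun y => (e y).totalDegree) y.2
  have h := Submodule.finrank_mono hrange
  rw [LinearMap.finrank_range_of_inj hinj, Module.finrank_pi_fintype] at h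
  unfold HF
  simpa using h


lemma zl_span {n : ℕ} (I : Set (MvPolynomial (Fin n) ℂ)) :
    zeroLocus n (Ideal.span I : Set (MvPolynomial (Fin n) ℂ)) = zeroLocus n I := by
  refine Subset.antisymm (zl_anti Ideal.subset_span) ?_
  intro x hx
  have : Ideal.span I ≤ vanishingIdeal n {x} := by
    rw [Ideal.span_le]
    rintro f hf y rfl
    exact hx f hf
  exact fun f hf => this hf x rfl

lemma le_vi {n : ℕ} {V : Set (Fin n → ℂ)} {I : Set (MvPolynomial (Fin n) ℂ)} (h : V ⊆ zeroLocus n I) :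
    Ideal.span I ≤ vanishingIdeal n V := by
  rw [Ideal.span_le]
  exact fun f hf x hx => h hx f hf

lemma comp_of_minimal {n : ℕ} {J r : Ideal (MvPolynomial (Fin n) ℂ)} (hr : r ∈ J.minimalPrimes) :
    IsIrredComponent n (zeroLocus n (r : Set (MvPolynomial (Fin n) ℂ)))
      (zeroLocus n (J : Set (MvPolynomial (Fin n) ℂ))) := by
  have hrp : r.IsPrime := hr.1.1
  refine ⟨prime_irr r, zl_anti hr.1.2, ?_⟩
  intro W hW h1 h2
  have h3 := irr_prime hW
  have h4 : vanishingIdeal n W ≤ r := by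
    rw [← vi_zl n r]; exact vi_anti h1
  have h5 : J ≤ vanishingIdeal n W := fun f hf x hx => h2 hx f hf
  have h6 : r ≤ vanishingIdeal n W := hr.2 ⟨h3, h5⟩ h4
  rw [← zl_vi hW.1, le_antisymm h4 h6]

lemma exists_family {n : ℕ} {V : Set (Fin n → ℂ)} (hV : IsIrredVariety n V) (i : ℕ) (hi : 1 ≤ i)
    (hi' : i ≤ n - dim n V) : ∃ I : Finset (MvPolynomial (Fin n) ℂ),
      (∀ f ∈ I, f.totalDegree ≤ partialDeg n V i) ∧ V ⊆ zeroLocus n ↑I ∧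
      MaxCompDimEq n (zeroLocus n ↑I) V (n - i) := by
  have hp := irr_prime hV
  have hne : { δ | ∃ I : Finset (MvPolynomial (Fin n) ℂ),
    (∀ f ∈ I, f.totalDegree ≤ δ) ∧ V ⊆ zeroLocus n ↑I ∧
      MaxCompDimEq n (zeroLocus n ↑I) V (n - i) }.Nonempty := by
    have hdV : dp (vanishingIdeal n V) = dim n V := by rw [dp, zl_vi hV.1]
    obtain ⟨p, hpV, hpp, hdp⟩ := exists_prime_dp (n - i) (Nat.sub_le _ _) (n - i - dim n V)
      (vanishingIdeal n V) (by omega)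
    obtain ⟨I, hI⟩ := (IsNoetherian.noetherian p : p.FG)
    refine ⟨I.sup totalDegree, I, fun f hf => Finset.le_sup hf, ?_, ?_⟩
    · rw [← zl_span, show Ideal.span (I : Set (MvPolynomial (Fin n) ℂ)) = p from hI]
      rw [← zl_vi hV.1]; exact zl_anti hpV
    · rw [← zl_span, show Ideal.span (I : Set (MvPolynomial (Fin n) ℂ)) = p from hI]
      refine ⟨⟨_, ⟨prime_irr p, subset_rfl, fun W' _ h1 h2 => Subset.antisymm h2 h1⟩, ?_, hdp⟩, ?_⟩
      · rw [← zl_vi hV.1]; exact zl_anti hpV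
      · intro W hW _
        have := hW.2.2 _ (prime_irr p) hW.2.1 subset_rfl
        rw [← this]; exact hdp.le
  have := Nat.sInf_mem hne
  rw [partialDeg, if_neg (by omega)]
  exact this

lemma main_induct {n : ℕ} {V : Set (Fin n → ℂ)} (hV : IsIrredVariety n V) (j : ℕ) 
    (hj : j ≤ n - dim n V) : ∃ q ≤ vanishingIdeal n V, q.IsPrime ∧ n ≤ dp q + j ∧
      ∀ N D e c : ℕ, (∀ m, N * (m + e).choose e ≤ D * HF q (m + c)) →
        ∀ m, N * (m + (e + j)).choose (e + j) ≤
          D * (∏ i ∈ Finset.Icc 1 j, partialDeg n V i) * (m + c + n).choose n := by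
  have hVp := irr_prime hV
  induction j with
  | zero =>
    refine ⟨⊥, bot_le, Ideal.isPrime_bot, by rw [dp_bot]; omega, ?_⟩
    intro N D e c h m
    simpa using (h m).trans (Nat.mul_le_mul_left _ (HF_le _ _))
  | succ j ih =>
    obtain ⟨q, hqV, hq, hdq, hH⟩ := ih (by omega)
    obtain ⟨I, hId, hVI, hmax⟩ := exists_family hV (j + 1) (by omega) hj
    obtain ⟨f, hfI, hfq⟩ : ∃ f ∈ I, f ∉ q := by
      by_contra! hc
      have hle : Ideal.span (I : Set (MvPolynomial (Fin n) ℂ)) ≤ q := Ideal.span_le.2 hc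
      obtain ⟨r, hr, hrq⟩ := Ideal.exists_minimalPrimes_le hle
      have hrp : r.IsPrime := hr.1.1
      have h1 := hmax.2 _ (by rw [← zl_span]; exact comp_of_minimal hr) (by
        rw [← zl_vi hV.1]; exact zl_anti (hrq.trans hqV))
      have h2 := dp_anti hrq
      have h3 : dp r ≤ n - (j + 1) := h1
      omega
    have hfV : f ∈ vanishingIdeal n V := le_vi hVI (Ideal.subset_span hfI)
    obtain ⟨q', hq', hq'V⟩ := Ideal.exists_minimalPrimes_le
      (show q ⊔ Ideal.span {f} ≤ vanishingIdeal n V from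
        sup_le hqV (by rw [Ideal.span_le]; rintro _ rfl; exact hfV))
    have hq'p : q'.IsPrime := hq'.1.1
    refine ⟨q', hq'V, hq'p, ?_, ?_⟩
    · have := dp_step f hq'; omega
    · intro N D e c h m
      have hfq' : f ∈ q' := hq'.1.2 (Ideal.mem_sup_right (Ideal.subset_span rfl))
      have hsum := HF_sum (le_sup_left.trans hq'.1.2) hfq' hfq hq'p.ne_top (hId f hfI)
      have := hH N (D * partialDeg n V (j + 1)) (e + 1) c (fun m => by
        rw [← hockey, Finset.mul_sum, mul_assoc]
        calc ∑ k ∈ Finset.range (m + 1), N * (k + e).choose e 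
            ≤ ∑ k ∈ Finset.range (m + 1), D * HF q' (c + k) := 
              Finset.sum_le_sum fun k _ => by rw [add_comm c k]; exact h k
          _ = D * ∑ k ∈ Finset.range (m + 1), HF q' (c + k) := by rw [Finset.mul_sum]
          _ ≤ D * ∑ k ∈ Finset.range (m + c + 1), HF q' k := by
              apply Nat.mul_le_mul_left
              rw [show m + c + 1 = c + (m + 1) by omega, Finset.sum_range_add (f := fun k => HF q' k) (n := c) (m := m + 1)]
              exact Nat.le_add_left _ _
          _ ≤ _ := Nat.mul_le_mul_left _ (hsum (m + c))) m
      rw [Finset.prod_Icc_succ_top (by omega)]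
      rw [show e + (j + 1) = e + 1 + j by omega]
      refine this.trans (le_of_eq ?_)
      ring


/-- Corollary 5.4 of the paper: `deg V ≤ ∏_{i=1}^{n-d} δ_i(V)` for every
irreducible variety `V ⊆ ℂⁿ` of dimension `d`. -/
theorem statement16 (n : ℕ) (V : Set (Fin n → ℂ)) (d : ℕ)
    (hV : IsIrredVariety n V) (hd : dim n V = d) :
    degree n V ≤ ∏ i ∈ Finset.Icc 1 (n - d), partialDeg n V i := by
  subst hd
  have hVp := irr_prime hV
  have hdV : dp (vanishingIdeal n V) = dim n V := by rw [dp, zl_vi hV.1]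
  have hdn : dim n V ≤ n := hdV ▸ dp_le _
  refine csSup_le' ?_
  rintro N ⟨L, hL, hfin, rfl⟩
  obtain ⟨c, hc⟩ := lower_bound (vanishingIdeal n V) hdV L hL (by rwa [zl_vi hV.1])
  rw [zl_vi hV.1] at hc
  obtain ⟨q, hqV, -, -, hH⟩ := main_induct hV (n - dim n V) le_rfl
  have := hH (V ∩ ↑L).ncard 1 (dim n V) c (fun m => by
    rw [one_mul (HF q (m + c))]; exact (hc m).trans (HF_anti hqV _))
  rw [one_mul (Finset.prod _ _), Nat.add_sub_cancel' hdn] at this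
  exact asymp _ _ n c this

end Paper
end
end
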